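/- arXiv:1610.09833 — 3 statements merged into one kernel-verified Lean document; each statement's English description precedes it below -/
import Mathlib

section
/- Let f: ℝ → ℝ satisfy hypothesis (H). Define Δ = {(t,ρ) ∈ (0,∞) × (−π,π) : −r_t < ρ < r_t}, let Δ̄ = {(t,ρ) ∈ (0,∞) × (−π,π) : −r_t ≤ ρ ≤ r_t} be its closure in (0,∞) × (−π,π), and let F(t,ρ) = (U_t(ρ), U_t'(ρ)). Then there exists an open neighborhood Δ̃ of Δ̄ in (0,∞) × (−π,π) such that F restricted to Δ̃ is injective with everywhere invertible differential, i.e. F is a diffeomorphism from Δ̃ onto its image. -/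
open Real Set

/-- `U` is an even `C²` solution of `U'' + (cot ρ)·U' + f(U) = 0` on `(-π, π)`. -/
def IsEvenSol (f U : ℝ → ℝ) : Prop :=
  (∀ ρ ∈ Set.Ioo (-Real.pi) Real.pi, U (-ρ) = U ρ) ∧
  ContDiffOn ℝ 2 U (Set.Ioo (-Real.pi) Real.pi) ∧
  ∀ ρ ∈ Set.Ioo (-Real.pi) Real.pi, ρ ≠ 0 →
    deriv (deriv U) ρ + (Real.cos ρ / Real.sin ρ) * deriv U ρ + f (U ρ) = 0

/-!
Smooth dependence on `t` is not available off the shelf because of the singular coefficient `cot`.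
It is obtained from an a priori `C²` bound, linear in `|Z 0|` and the forcing, for even `Z` with
controlled `Z'' + cot ρ Z'`: applied to differences of solutions it gives Lipschitz dependence on
`t`, applied to differences of divided differences it makes these Cauchy in `C²`.

The differential of `F` then has determinant `J = W U'' - W' U'`, where `W = ∂U/∂t` solves the
linearized equation. By (H), `W / U` is nondecreasing, hence `W > 0` on `[0, r)`; and
`(sin ρ J)' = W U' / sin ρ < 0`, hence `J < 0` on `Δ̄`. Along a curve `U = x` in the half `ρ > 0`
of `Δ̄` the slope `U'` changes at the rate `-J / U' < 0`, so it determines `t`; the sign of `U'`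
tells the two halves apart, and `F` is injective on `Δ̄`.

Near its points, `Δ̄` is the preimage under `F` of the half plane `{x ≥ 0}`. As `F` is open there,
`F` restricted to `Δ̄` is a homeomorphism onto its image, and injectivity on `Δ̄` together with
local injectivity extends to a neighborhood.
-/

open Filter Topology

/-! ### Even `C²` functions and the singular operator -/

/-- The Laplacian of the round unit sphere on functions of the polar angle alone. At the pole
`ρ = 0` the convention `x / 0 = 0` leaves only the second derivative; the continuous extension
there is twice that value, see `IsEvenC2.tendsto_zonalLaplacian`. -/
noncomputable def zonalLaplacian (Z : ℝ → ℝ) (ρ : ℝ) : ℝ :=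
  deriv (deriv Z) ρ + cos ρ / sin ρ * deriv Z ρ

/-- The 2-jet of a real function. With the maximum norm on the product, uniform convergence of jets
is convergence in `C²`. -/
noncomputable def jet (Z : ℝ → ℝ) (ρ : ℝ) : ℝ × ℝ × ℝ :=
  (Z ρ, deriv Z ρ, deriv (deriv Z) ρ)

/-- The even `C²` functions on `(-π, π)`: the functions among which the solutions of the equation
and of its linearization live. -/
structure IsEvenC2 (Z : ℝ → ℝ) : Prop where
  even : ∀ ρ ∈ Ioo (-π) π, Z (-ρ) = Z ρ
  contDiffOn : ContDiffOn ℝ 2 Z (Ioo (-π) π)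

theorem zero_mem_Ioo_neg_pi_pi : (0 : ℝ) ∈ Ioo (-π) π :=
  ⟨neg_neg_iff_pos.2 pi_pos, pi_pos⟩

theorem Icc_neg_subset_Ioo_neg_pi_pi {a : ℝ} (haπ : a < π) : Icc (-a) a ⊆ Ioo (-π) π :=
  Icc_subset_Ioo (neg_lt_neg haπ) haπ

theorem Icc_zero_subset_Ioo_neg_pi_pi {a : ℝ} (haπ : a < π) : Icc 0 a ⊆ Ioo (-π) π :=
  Icc_subset_Ioo zero_mem_Ioo_neg_pi_pi.1 haπ

theorem sin_ne_zero_of_mem_Ioo {ρ : ℝ} (hρ : ρ ∈ Ioo (-π) π) (hρ0 : ρ ≠ 0) : sin ρ ≠ 0 :=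
  (sin_eq_zero_iff_of_lt_of_lt hρ.1 hρ.2).not.2 hρ0

theorem Icc_neg_mem_nhds {a ρ : ℝ} (hρ : |ρ| < a) : Icc (-a) a ∈ 𝓝 ρ :=
  Icc_mem_nhds (neg_lt_of_abs_lt hρ) (lt_of_abs_lt hρ)

theorem exists_Icc_neg_mem_nhds {ρ : ℝ} (hρ : ρ ∈ Ioo (-π) π) :
    ∃ a ∈ Ioo 0 π, Icc (-a) a ∈ 𝓝 ρ := by
  obtain ⟨a, hρa, haπ⟩ := exists_between (abs_lt.2 hρ)
  exact ⟨a, ⟨(abs_nonneg ρ).trans_lt hρa, haπ⟩, Icc_neg_mem_nhds hρa⟩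

namespace IsEvenC2

variable {Z V : ℝ → ℝ} {ρ : ℝ}

theorem contDiffOn_deriv (hZ : IsEvenC2 Z) : ContDiffOn ℝ 1 (deriv Z) (Ioo (-π) π) :=
  ((contDiffOn_succ_iff_deriv_of_isOpen (n := 1) isOpen_Ioo).1
    (by simpa only [one_add_one_eq_two] using hZ.contDiffOn)).2.2

theorem hasDerivAt (hZ : IsEvenC2 Z) (hρ : ρ ∈ Ioo (-π) π) : HasDerivAt Z (deriv Z ρ) ρ :=
  ((hZ.contDiffOn.differentiableOn two_ne_zero).differentiableAt
    (isOpen_Ioo.mem_nhds hρ)).hasDerivAt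

theorem hasDerivAt_deriv (hZ : IsEvenC2 Z) (hρ : ρ ∈ Ioo (-π) π) :
    HasDerivAt (deriv Z) (deriv (deriv Z) ρ) ρ :=
  ((hZ.contDiffOn_deriv.differentiableOn one_ne_zero).differentiableAt
    (isOpen_Ioo.mem_nhds hρ)).hasDerivAt

theorem continuousOn_jet (hZ : IsEvenC2 Z) : ContinuousOn (jet Z) (Ioo (-π) π) :=
  hZ.contDiffOn.continuousOn.prodMk <| hZ.contDiffOn_deriv.continuousOn.prodMk <|
    hZ.contDiffOn_deriv.continuousOn_deriv_of_isOpen isOpen_Ioo le_rfl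

theorem continuousOn (hZ : IsEvenC2 Z) : ContinuousOn Z (Ioo (-π) π) :=
  hZ.contDiffOn.continuousOn

theorem of_hasDerivAt {Z' Z'' : ℝ → ℝ} (heven : ∀ ρ ∈ Ioo (-π) π, Z (-ρ) = Z ρ)
    (hZ : ∀ ρ ∈ Ioo (-π) π, HasDerivAt Z (Z' ρ) ρ)
    (hZ' : ∀ ρ ∈ Ioo (-π) π, HasDerivAt Z' (Z'' ρ) ρ)
    (hZ'' : ContinuousOn Z'' (Ioo (-π) π)) :
    IsEvenC2 Z ∧ ∀ ρ ∈ Ioo (-π) π, jet Z ρ = (Z ρ, Z' ρ, Z'' ρ) := by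
  have hderiv : EqOn (deriv Z) Z' (Ioo (-π) π) := fun ρ hρ => (hZ ρ hρ).deriv
  have hderiv₂ : EqOn (deriv (deriv Z)) Z'' (Ioo (-π) π) := fun ρ hρ =>
    (hderiv.eventuallyEq_of_mem (isOpen_Ioo.mem_nhds hρ)).deriv_eq.trans (hZ' ρ hρ).deriv
  have hZ'_C1 : ContDiffOn ℝ 1 Z' (Ioo (-π) π) := by
    rw [← zero_add 1, contDiffOn_succ_iff_deriv_of_isOpen isOpen_Ioo, contDiffOn_zero]
    exact ⟨fun ρ hρ => (hZ' ρ hρ).differentiableAt.differentiableWithinAt, by simp,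
      hZ''.congr fun ρ hρ => (hZ' ρ hρ).deriv⟩
  refine ⟨⟨heven, ?_⟩, fun ρ hρ => by rw [jet, hderiv hρ, hderiv₂ hρ]⟩
  rw [← one_add_one_eq_two, contDiffOn_succ_iff_deriv_of_isOpen isOpen_Ioo]
  exact ⟨fun ρ hρ => (hZ ρ hρ).differentiableAt.differentiableWithinAt, by simp,
    hZ'_C1.congr hderiv⟩

theorem deriv_neg (hZ : IsEvenC2 Z) (hρ : ρ ∈ Ioo (-π) π) : deriv Z (-ρ) = -deriv Z ρ := by
  have h : (fun x => Z (-x)) =ᶠ[𝓝 ρ] Z := by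
    filter_upwards [isOpen_Ioo.mem_nhds hρ] using hZ.even
  linarith [h.deriv_eq, deriv_comp_neg Z ρ]

theorem deriv_deriv_neg (hZ : IsEvenC2 Z) (hρ : ρ ∈ Ioo (-π) π) :
    deriv (deriv Z) (-ρ) = deriv (deriv Z) ρ := by
  have h : (fun x => deriv Z (-x)) =ᶠ[𝓝 ρ] fun x => -deriv Z x := by
    filter_upwards [isOpen_Ioo.mem_nhds hρ] with x hx using hZ.deriv_neg hx
  have h' := h.deriv_eq
  rw [deriv_comp_neg, deriv.fun_neg] at h'
  exact neg_inj.1 h'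

theorem deriv_zero (hZ : IsEvenC2 Z) : deriv Z 0 = 0 := by
  have h := hZ.deriv_neg zero_mem_Ioo_neg_pi_pi
  rw [neg_zero] at h
  linarith

theorem norm_jet_neg (hZ : IsEvenC2 Z) (hρ : ρ ∈ Ioo (-π) π) : ‖jet Z (-ρ)‖ = ‖jet Z ρ‖ := by
  simp only [jet, hZ.even ρ hρ, hZ.deriv_neg hρ, hZ.deriv_deriv_neg hρ, Prod.norm_mk, norm_neg]

theorem sub (hZ : IsEvenC2 Z) (hV : IsEvenC2 V) : IsEvenC2 (Z - V) where
  even ρ hρ := by simp only [Pi.sub_apply, hZ.even ρ hρ, hV.even ρ hρ]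
  contDiffOn := hZ.contDiffOn.sub hV.contDiffOn

theorem const_smul (hZ : IsEvenC2 Z) (c : ℝ) : IsEvenC2 (c • Z) where
  even ρ hρ := by simp only [Pi.smul_apply, hZ.even ρ hρ]
  contDiffOn := hZ.contDiffOn.const_smul c

theorem jet_sub (hZ : IsEvenC2 Z) (hV : IsEvenC2 V) (hρ : ρ ∈ Ioo (-π) π) :
    jet (Z - V) ρ = jet Z ρ - jet V ρ := by
  have hderiv : EqOn (deriv (Z - V)) (deriv Z - deriv V) (Ioo (-π) π) := fun x hx =>
    ((hZ.hasDerivAt hx).sub (hV.hasDerivAt hx)).deriv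
  have hderiv₂ : deriv (deriv (Z - V)) ρ = deriv (deriv Z) ρ - deriv (deriv V) ρ :=
    (hderiv.eventuallyEq_of_mem (isOpen_Ioo.mem_nhds hρ)).deriv_eq.trans
      ((hZ.hasDerivAt_deriv hρ).sub (hV.hasDerivAt_deriv hρ)).deriv
  simp only [jet, hderiv hρ, hderiv₂, Pi.sub_apply, Prod.mk_sub_mk]

theorem zonalLaplacian_sub (hZ : IsEvenC2 Z) (hV : IsEvenC2 V) (hρ : ρ ∈ Ioo (-π) π) :
    zonalLaplacian (Z - V) ρ = zonalLaplacian Z ρ - zonalLaplacian V ρ := by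
  have h := hZ.jet_sub hV hρ
  simp only [jet, Prod.mk_sub_mk, Prod.mk.injEq] at h
  rw [zonalLaplacian, h.2.1, h.2.2, zonalLaplacian, zonalLaplacian]
  ring

end IsEvenC2

theorem jet_const_smul (c : ℝ) (Z : ℝ → ℝ) (ρ : ℝ) : jet (c • Z) ρ = c • jet Z ρ := by
  have hderiv : ∀ Y : ℝ → ℝ, deriv (c • Y) = c • deriv Y := fun Y =>
    funext fun x => deriv_const_smul_field c Y
  simp only [jet, hderiv, Pi.smul_apply, Prod.smul_mk]

theorem zonalLaplacian_const_smul (c : ℝ) (Z : ℝ → ℝ) (ρ : ℝ) :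
    zonalLaplacian (c • Z) ρ = c * zonalLaplacian Z ρ := by
  have h := jet_const_smul c Z ρ
  simp only [jet, Prod.smul_mk, Prod.mk.injEq, smul_eq_mul] at h
  rw [zonalLaplacian, h.2.1, h.2.2, zonalLaplacian]
  ring

namespace IsEvenC2

variable {Z : ℝ → ℝ} {m ρ : ℝ}

theorem hasDerivAt_sin_mul_deriv (hZ : IsEvenC2 Z) (hρ : ρ ∈ Ioo (-π) π) :
    HasDerivAt (fun x => sin x * deriv Z x) (sin ρ * zonalLaplacian Z ρ) ρ := by
  refine ((hasDerivAt_sin ρ).mul (hZ.hasDerivAt_deriv hρ)).congr_deriv ?_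
  rcases eq_or_ne ρ 0 with rfl | hρ0
  · simp [hZ.deriv_zero]
  · rw [zonalLaplacian]
    field_simp [sin_ne_zero_of_mem_Ioo hρ hρ0]
    ring

theorem tendsto_zonalLaplacian (hZ : IsEvenC2 Z) :
    Tendsto (zonalLaplacian Z) (𝓝[≠] 0) (𝓝 (2 * deriv (deriv Z) 0)) := by
  have hslope : Tendsto (slope (deriv Z) 0) (𝓝[≠] 0) (𝓝 (deriv (deriv Z) 0)) :=
    (hZ.hasDerivAt_deriv zero_mem_Ioo_neg_pi_pi).tendsto_slope
  have hsin : Tendsto (slope sin 0) (𝓝[≠] 0) (𝓝 1) := by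
    simpa only [cos_zero] using (hasDerivAt_sin 0).tendsto_slope
  have hcos : Tendsto cos (𝓝[≠] 0) (𝓝 1) :=
    cos_zero ▸ continuous_cos.continuousAt.tendsto.mono_left nhdsWithin_le_nhds
  have hjet : ContinuousAt (jet Z) 0 :=
    hZ.continuousOn_jet.continuousAt (isOpen_Ioo.mem_nhds zero_mem_Ioo_neg_pi_pi)
  have hdd : Tendsto (deriv (deriv Z)) (𝓝[≠] 0) (𝓝 (deriv (deriv Z) 0)) :=
    hjet.snd.snd.mono_left nhdsWithin_le_nhds
  have hlim := hdd.add ((hcos.div hsin one_ne_zero).mul hslope)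
  rw [div_one, one_mul, ← two_mul] at hlim
  refine hlim.congr' ?_
  filter_upwards [self_mem_nhdsWithin] with ρ (hρ : ρ ≠ 0)
  simp only [zonalLaplacian, Pi.div_apply, slope_def_field, sin_zero, hZ.deriv_zero, sub_zero]
  field_simp

/-! ### A priori bound -/

theorem abs_sin_mul_deriv_le (hZ : IsEvenC2 Z) (hρ : ρ ∈ Ico 0 π)
    (hm : ∀ x ∈ Ioo 0 ρ, |zonalLaplacian Z x| ≤ m) : |sin ρ * deriv Z ρ| ≤ m * (1 - cos ρ) := by
  have hI := Icc_zero_subset_Ioo_neg_pi_pi hρ.2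
  refine image_norm_le_of_norm_deriv_right_le_deriv_boundary (a := 0) (b := ρ)
    (f := fun x => sin x * deriv Z x) (f' := fun x => sin x * zonalLaplacian Z x)
    (B := fun x => m * (1 - cos x)) (B' := fun x => m * sin x)
    (fun x hx => (hZ.hasDerivAt_sin_mul_deriv (hI hx)).continuousAt.continuousWithinAt)
    (fun x hx => (hZ.hasDerivAt_sin_mul_deriv (hI (Ico_subset_Icc_self hx))).hasDerivWithinAt)
    (by simp) (fun x => by simpa using ((hasDerivAt_cos x).const_sub 1).const_mul m)
    (fun x hx => ?_) (right_mem_Icc.2 hρ.1)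
  rcases hx.1.eq_or_lt with rfl | hx0
  · simp
  · have hsin : 0 < sin x := sin_pos_of_pos_of_lt_pi hx0 (hx.2.trans hρ.2)
    rw [norm_mul, Real.norm_of_nonneg hsin.le, mul_comm, norm_eq_abs]
    exact mul_le_mul_of_nonneg_right (hm x ⟨hx0, hx.2⟩) hsin.le

end IsEvenC2

theorem one_add_cos_pos {a : ℝ} (ha0 : 0 ≤ a) (haπ : a < π) : 0 < 1 + cos a := by
  linarith [cos_pi, cos_lt_cos_of_nonneg_of_le_pi ha0 le_rfl haπ]

theorem neg_cos_div_sin_le {a ρ : ℝ} (hρ : ρ ∈ Ioc 0 a) (haπ : a < π) :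
    -(cos ρ / sin ρ) ≤ 1 / (1 + cos a) := by
  have hpos := one_add_cos_pos (hρ.1.le.trans hρ.2) haπ
  have hsin : 0 < sin ρ := sin_pos_of_pos_of_lt_pi hρ.1 (hρ.2.trans_lt haπ)
  have hcos : cos a ≤ cos ρ := cos_le_cos_of_nonneg_of_le_pi hρ.1.le haπ.le hρ.2
  rw [← neg_div, div_le_div_iff₀ hsin hpos]
  nlinarith [sin_sq_add_cos_sq ρ, sin_le_one ρ, cos_le_one ρ]

namespace IsEvenC2

variable {Z : ℝ → ℝ} {a b m K η ρ : ℝ}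

theorem abs_cot_mul_deriv_le (hZ : IsEvenC2 Z) (hρ : ρ ∈ Ioc 0 a) (haπ : a < π)
    (hm : ∀ x ∈ Ioo 0 ρ, |zonalLaplacian Z x| ≤ m) :
    |cos ρ / sin ρ * deriv Z ρ| ≤ m * (1 / (1 + cos a)) := by
  have hρπ : ρ < π := hρ.2.trans_lt haπ
  have hsin : 0 < sin ρ := sin_pos_of_pos_of_lt_pi hρ.1 hρπ
  have hcos : cos a ≤ cos ρ := cos_le_cos_of_nonneg_of_le_pi hρ.1.le haπ.le hρ.2
  have hm0 : 0 ≤ m := (abs_nonneg _).trans (hm (ρ / 2) ⟨half_pos hρ.1, half_lt_self hρ.1⟩)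
  have hflux := hZ.abs_sin_mul_deriv_le ⟨hρ.1.le, hρπ⟩ hm
  have heq : cos ρ / sin ρ * deriv Z ρ = cos ρ * (sin ρ * deriv Z ρ) / sin ρ ^ 2 := by
    field_simp
  rw [heq, abs_div, abs_mul, abs_of_pos (pow_pos hsin 2), mul_one_div,
    div_le_div_iff₀ (pow_pos hsin 2) (one_add_cos_pos (hρ.1.le.trans hρ.2) haπ)]
  calc |cos ρ| * |sin ρ * deriv Z ρ| * (1 + cos a)
      ≤ 1 * (m * (1 - cos ρ)) * (1 + cos ρ) := by
        have hcos1 : 0 ≤ 1 - cos ρ := sub_nonneg.2 (cos_le_one ρ)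
        gcongr
        · linarith [one_add_cos_pos (hρ.1.le.trans hρ.2) haπ]
        · exact abs_cos_le_one ρ
    _ = m * sin ρ ^ 2 := by rw [sin_sq]; ring

theorem energy_deriv_le (hK : 0 ≤ K) (haπ : a < π) (hρ : ρ ∈ Ioc 0 a)
    (hLZ : |zonalLaplacian Z ρ| ≤ K * |Z ρ| + η) :
    2 * Z ρ * deriv Z ρ + 2 * deriv Z ρ * deriv (deriv Z) ρ ≤
      (2 + K + 2 / (1 + cos a)) * (Z ρ ^ 2 + deriv Z ρ ^ 2 + η ^ 2) := by
  set z := Z ρ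
  set y := deriv Z ρ
  have hsplit : deriv (deriv Z) ρ = zonalLaplacian Z ρ - cos ρ / sin ρ * y := by
    rw [zonalLaplacian]; ring
  have hκ : 0 ≤ 1 / (1 + cos a) :=
    one_div_nonneg.2 (one_add_cos_pos (hρ.1.le.trans hρ.2) haπ).le
  have hcot : -(cos ρ / sin ρ) * y ^ 2 ≤ 1 / (1 + cos a) * y ^ 2 :=
    mul_le_mul_of_nonneg_right (neg_cos_div_sin_le hρ haπ) (sq_nonneg y)
  have hyL : y * zonalLaplacian Z ρ ≤ |y| * (K * |z| + η) :=
    (le_abs_self _).trans <| (abs_mul _ _).trans_le <| by gcongr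
  have hK' : 2 * (|y| * (K * |z|)) ≤ K * (y ^ 2 + z ^ 2) := by
    nlinarith [mul_nonneg hK (sq_nonneg (|y| - |z|)), sq_abs y, sq_abs z]
  have hη : 2 * (|y| * η) ≤ y ^ 2 + η ^ 2 := by nlinarith [sq_nonneg (|y| - η), sq_abs y]
  have hrest : 0 ≤ 1 / (1 + cos a) * (z ^ 2 + η ^ 2) := by positivity
  rw [hsplit, ← mul_one_div 2]
  nlinarith [sq_nonneg (z - y), mul_nonneg hK (sq_nonneg η), sq_nonneg z, sq_nonneg η]

/-- Grönwall for the energy `Z² + Z'² + η²`; only the upper bound on `-cot` is needed, so the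
singularity of `cot` at `0` is harmless. -/
theorem energy_le (hZ : IsEvenC2 Z) (hK : 0 ≤ K) (haπ : a < π) (hba : b ≤ a)
    (hLZ : ∀ x ∈ Ioo 0 b, |zonalLaplacian Z x| ≤ K * |Z x| + η) (hρ : ρ ∈ Icc 0 b) :
    Z ρ ^ 2 + deriv Z ρ ^ 2 + η ^ 2 ≤
      (Z 0 ^ 2 + η ^ 2) * exp ((2 + K + 2 / (1 + cos a)) * ρ) := by
  have hI := Icc_zero_subset_Ioo_neg_pi_pi (hba.trans_lt haπ)
  have hderiv : ∀ x ∈ Icc 0 b, HasDerivAt (fun x => Z x ^ 2 + deriv Z x ^ 2 + η ^ 2)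
      (2 * Z x * deriv Z x + 2 * deriv Z x * deriv (deriv Z) x) x := fun x hx => by
    simpa using ((hZ.hasDerivAt (hI hx)).pow 2).add ((hZ.hasDerivAt_deriv (hI hx)).pow 2)
      |>.add_const (η ^ 2)
  have hgron := le_gronwallBound_of_liminf_deriv_right_le (a := 0) (b := b) (ε := 0)
    (K := 2 + K + 2 / (1 + cos a)) (fun x hx => (hderiv x hx).continuousAt.continuousWithinAt)
    (fun x hx _ =>
      (hderiv x (Ico_subset_Icc_self hx)).hasDerivWithinAt.liminf_right_slope_le)
    le_rfl (fun x hx => ?_) ρ hρ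
  · simpa [gronwallBound_ε0, hZ.deriv_zero] using hgron
  rw [add_zero]
  rcases hx.1.eq_or_lt with rfl | hx0
  · have hpos := one_add_cos_pos (hx.2.le.trans hba) haπ
    rw [hZ.deriv_zero, mul_zero, mul_zero, zero_mul, add_zero]
    positivity
  · exact energy_deriv_le hK haπ ⟨hx0, hx.2.le.trans hba⟩ (hLZ x ⟨hx0, hx.2⟩)

theorem abs_deriv_deriv_le (hZ : IsEvenC2 Z) (hρ : ρ ∈ Ioc 0 a) (haπ : a < π)
    (hm : ∀ x ∈ Ioc 0 ρ, |zonalLaplacian Z x| ≤ m) :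
    |deriv (deriv Z) ρ| ≤ m * (1 + 1 / (1 + cos a)) := by
  have hcot := hZ.abs_cot_mul_deriv_le hρ haπ fun x hx => hm x (Ioo_subset_Ioc_self hx)
  have hsplit : deriv (deriv Z) ρ = zonalLaplacian Z ρ - cos ρ / sin ρ * deriv Z ρ := by
    rw [zonalLaplacian, add_sub_cancel_right]
  rw [hsplit, mul_one_add]
  exact (abs_sub _ _).trans (add_le_add (hm ρ (right_mem_Ioc.2 hρ.1)) hcot)

theorem norm_jet_le_of_forall_Ioo (hZ : IsEvenC2 Z) (hb : 0 < b) (hbπ : b < π)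
    (hm : ∀ x ∈ Ioo 0 b, ‖jet Z x‖ ≤ m) (hρ : ρ ∈ Icc (-b) b) : ‖jet Z ρ‖ ≤ m := by
  have hnonneg : ∀ x ∈ Icc 0 b, ‖jet Z x‖ ≤ m := by
    rw [← closure_Ioo hb.ne]
    refine le_on_closure hm ?_ continuousOn_const
    rw [closure_Ioo hb.ne]
    exact hZ.continuousOn_jet.norm.mono (Icc_zero_subset_Ioo_neg_pi_pi hbπ)
  rcases le_total 0 ρ with h0 | h0
  · exact hnonneg ρ ⟨h0, hρ.2⟩
  · rw [← hZ.norm_jet_neg (Icc_neg_subset_Ioo_neg_pi_pi hbπ hρ)]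
    exact hnonneg (-ρ) ⟨neg_nonneg.2 h0, neg_le.1 hρ.1⟩

end IsEvenC2

theorem exists_norm_jet_le {a K : ℝ} (ha0 : 0 < a) (haπ : a < π) (hK : 0 ≤ K) :
    ∃ C > 0, ∀ Z, IsEvenC2 Z → ∀ η ≥ 0, ∀ b ∈ Ioc 0 a,
      (∀ ρ ∈ Ioo 0 b, |zonalLaplacian Z ρ| ≤ K * |Z ρ| + η) →
        ∀ ρ ∈ Icc (-b) b, ‖jet Z ρ‖ ≤ C * (|Z 0| + η) := by
  have hcos := one_add_cos_pos ha0.le haπ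
  set κ := 1 / (1 + cos a)
  set M := 2 + K + 2 / (1 + cos a)
  have hκ0 : 0 ≤ κ := by positivity
  have hexp : 1 ≤ exp (M * a) := one_le_exp (by positivity)
  refine ⟨(K + 1) * (1 + κ) * exp (M * a), by positivity, fun Z hZ η hη b hb hLZ ρ hρ => ?_⟩
  rw [mul_assoc]
  set A := exp (M * a) * (|Z 0| + η)
  have hA0 : 0 ≤ A := by positivity
  have hηA : η ≤ A := by nlinarith [abs_nonneg (Z 0)]
  have henergy : ∀ x ∈ Ioo 0 b, Z x ^ 2 + deriv Z x ^ 2 + η ^ 2 ≤ A ^ 2 := fun x hx =>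
    calc Z x ^ 2 + deriv Z x ^ 2 + η ^ 2
        ≤ (Z 0 ^ 2 + η ^ 2) * exp (M * x) :=
          hZ.energy_le hK haπ hb.2 hLZ (Ioo_subset_Icc_self hx)
      _ ≤ (|Z 0| + η) ^ 2 * (exp (M * a) * exp (M * a)) := by
          have hxa : x ≤ a := hx.2.le.trans hb.2
          gcongr
          · nlinarith [sq_abs (Z 0), mul_nonneg (abs_nonneg (Z 0)) hη]
          · exact (exp_le_exp.2 (by gcongr)).trans (le_mul_of_one_le_left (exp_pos _).le hexp)
      _ = A ^ 2 := by ring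
  have hZA : ∀ x ∈ Ioo 0 b, |Z x| ≤ A := fun x hx =>
    abs_le_of_sq_le_sq (by nlinarith [henergy x hx]) hA0
  have hderivA : ∀ x ∈ Ioo 0 b, |deriv Z x| ≤ A := fun x hx =>
    abs_le_of_sq_le_sq (by nlinarith [henergy x hx]) hA0
  have hLZA : ∀ x ∈ Ioo 0 b, |zonalLaplacian Z x| ≤ (K + 1) * A := fun x hx =>
    (hLZ x hx).trans <| by nlinarith [mul_le_mul_of_nonneg_left (hZA x hx) hK]
  refine hZ.norm_jet_le_of_forall_Ioo hb.1 (hb.2.trans_lt haπ) (fun x hx => ?_) hρ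
  have hAm : A ≤ (K + 1) * (1 + κ) * A := le_mul_of_one_le_left hA0 (by nlinarith)
  refine max_le ((hZA x hx).trans hAm) (max_le ((hderivA x hx).trans hAm) ?_)
  rw [mul_right_comm]
  exact hZ.abs_deriv_deriv_le ⟨hx.1, hx.2.le.trans hb.2⟩ haπ
    fun y hy => hLZA y ⟨hy.1, hy.2.trans_lt hx.2⟩

/-! ### Differentiable dependence on the initial value -/

theorem forall_lt_of_forall_Ico_lt {α β : Type*} [ConditionallyCompleteLinearOrder α]
    [TopologicalSpace α] [OrderTopology α] [LinearOrder β] [TopologicalSpace β]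
    [ClosedIciTopology β] {g : α → β} {a b : α} {c : β} (hg : ContinuousOn g (Icc a b))
    (h : ∀ x ∈ Icc a b, (∀ y ∈ Ico a x, g y < c) → g x < c) : ∀ x ∈ Icc a b, g x < c := by
  by_contra! hex
  have hclosed := hg.preimage_isClosed_of_isClosed isClosed_Icc (isClosed_Ici (a := c))
  obtain ⟨x, ⟨hx, hcx⟩, hmin⟩ :=
    (isCompact_Icc.of_isClosed_subset hclosed inter_subset_left).exists_isLeast hex
  refine (h x hx fun y hy => ?_).not_ge hcx
  by_contra! hcy
  exact (hmin ⟨⟨hy.1, hy.2.le.trans hx.2⟩, hcy⟩).not_gt hy.2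

theorem eventually_abs_sub_sub_deriv_mul_le {f : ℝ → ℝ} (hf : ContDiff ℝ 1 f) (w : ℝ) {ε : ℝ}
    (hε : 0 < ε) :
    ∀ᶠ q : (ℝ × ℝ) × ℝ in 𝓝 ((w, w), w),
      |f q.1.1 - f q.1.2 - deriv f q.2 * (q.1.1 - q.1.2)| ≤ ε * |q.1.1 - q.1.2| := by
  have hstrict : ∀ᶠ p : ℝ × ℝ in 𝓝 (w, w),
      |f p.1 - f p.2 - (p.1 - p.2) * deriv f w| ≤ ε / 2 * |p.1 - p.2| := by
    simpa [mul_comm] using (hf.hasStrictDerivAt (x := w) one_ne_zero).isLittleO.def (half_pos hε)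
  have hderiv : ∀ᶠ v in 𝓝 w, |deriv f v - deriv f w| < ε / 2 :=
    Metric.tendsto_nhds.1 (hf.continuous_deriv le_rfl).continuousAt (ε / 2) (half_pos hε)
  filter_upwards [continuousAt_fst.eventually hstrict, continuousAt_snd.eventually hderiv]
    with q hq₁ hq₂
  calc |f q.1.1 - f q.1.2 - deriv f q.2 * (q.1.1 - q.1.2)|
      = |f q.1.1 - f q.1.2 - (q.1.1 - q.1.2) * deriv f w
          - (deriv f q.2 - deriv f w) * (q.1.1 - q.1.2)| := by ring_nf
    _ ≤ ε / 2 * |q.1.1 - q.1.2| + ε / 2 * |q.1.1 - q.1.2| := by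
        refine (abs_sub _ _).trans (add_le_add hq₁ ?_)
        rw [abs_mul]
        exact mul_le_mul_of_nonneg_right hq₂.le (abs_nonneg _)
    _ = ε * |q.1.1 - q.1.2| := by ring

namespace IsEvenSol

variable {f u : ℝ → ℝ} {ρ : ℝ}

theorem isEvenC2 (hu : IsEvenSol f u) : IsEvenC2 u := ⟨hu.1, hu.2.1⟩

theorem zonalLaplacian_eq (hu : IsEvenSol f u) (hρ : ρ ∈ Ioo (-π) π) (hρ0 : ρ ≠ 0) :
    zonalLaplacian u ρ = -f (u ρ) :=
  eq_neg_of_add_eq_zero_left (hu.2.2 ρ hρ hρ0)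

end IsEvenSol

theorem exists_norm_jet_sub_le {f : ℝ → ℝ} (hf : ContDiff ℝ 1 f) {a : ℝ} (ha : a ∈ Ioo 0 π)
    (B : ℝ) : ∃ C > 0, ∀ u v, IsEvenSol f u → IsEvenSol f v → ∀ b ∈ Ioc 0 a,
      (∀ ρ ∈ Ioo 0 b, |u ρ| ≤ B ∧ |v ρ| ≤ B) →
        ∀ ρ ∈ Icc (-b) b, ‖jet u ρ - jet v ρ‖ ≤ C * |u 0 - v 0| := by
  obtain ⟨K, hK⟩ := hf.locallyLipschitz.locallyLipschitzOn.exists_lipschitzOnWith_of_compact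
    (isCompact_Icc (a := -B) (b := B))
  obtain ⟨C, hC, hbound⟩ := exists_norm_jet_le ha.1 ha.2 K.2
  refine ⟨C, hC, fun u v hu hv b hb hB ρ hρ => ?_⟩
  have hI : ∀ {x}, x ∈ Icc (-b) b → x ∈ Ioo (-π) π :=
    fun hx => Icc_neg_subset_Ioo_neg_pi_pi (hb.2.trans_lt ha.2) hx
  have hL : ∀ x ∈ Ioo 0 b, |zonalLaplacian (u - v) x| ≤ K * |(u - v) x| + 0 := fun x hx => by
    have hxI : x ∈ Ioo (-π) π := hI ⟨by linarith [hx.1, hx.2], hx.2.le⟩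
    have hlip := hK.dist_le_mul _ (abs_le.1 (hB x hx).2) _ (abs_le.1 (hB x hx).1)
    rw [hu.isEvenC2.zonalLaplacian_sub hv.isEvenC2 hxI, hu.zonalLaplacian_eq hxI hx.1.ne',
      hv.zonalLaplacian_eq hxI hx.1.ne', neg_sub_neg, add_zero, Pi.sub_apply, abs_sub_comm (u x)]
    exact hlip
  simpa only [hu.isEvenC2.jet_sub hv.isEvenC2 (hI hρ), Pi.sub_apply, add_zero] using
    hbound (u - v) (hu.isEvenC2.sub hv.isEvenC2) 0 le_rfl b hb hL ρ hρ

/-- A family of even solutions indexed by an open set of initial values `U t 0 = t`. -/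
structure IsSolutionFamily (f : ℝ → ℝ) (T : Set ℝ) (U : ℝ → ℝ → ℝ) : Prop where
  isOpen : IsOpen T
  isEvenSol : ∀ t ∈ T, IsEvenSol f (U t)
  apply_zero : ∀ t ∈ T, U t 0 = t

/-- The divided difference `(U t - U s) / (t - s)` of a one-parameter family of functions, at
`p = (t, s)`, whose limit is the derivative with respect to the parameter; it vanishes when
`t = s`. -/
noncomputable def divDiff (U : ℝ → ℝ → ℝ) (p : ℝ × ℝ) : ℝ → ℝ :=
  (p.1 - p.2)⁻¹ • (U p.1 - U p.2)

theorem tendstoLocallyUniformlyOn_Ioo_neg_pi_pi {ι E : Type*} [UniformSpace E] {F : ι → ℝ → E}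
    {g : ℝ → E} {l : Filter ι} (h : ∀ a ∈ Ioo 0 π, TendstoUniformlyOn F g l (Icc (-a) a)) :
    TendstoLocallyUniformlyOn F g l (Ioo (-π) π) := fun u hu ρ hρ => by
  obtain ⟨a, ha, hmem⟩ := exists_Icc_neg_mem_nhds hρ
  exact ⟨Icc (-a) a, mem_nhdsWithin_of_mem_nhds hmem, h a ha u hu⟩

theorem continuousAt_uncurry_of_tendstoLocallyUniformlyOn {X Y E : Type*} [TopologicalSpace X]
    [TopologicalSpace Y] [UniformSpace E] {G : X → Y → E} {s : Set Y} {x : X} {y : Y}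
    (h : TendstoLocallyUniformlyOn G (G x) (𝓝 x) s) (hs : s ∈ 𝓝 y) (hG : ContinuousAt (G x) y) :
    ContinuousAt (fun p : X × Y => G p.1 p.2) (x, y) := by
  have hnhds : Tendsto Prod.snd (𝓝 (x, y)) (𝓝[s] y) :=
    tendsto_nhdsWithin_iff.2 ⟨continuousAt_snd, continuousAt_snd.eventually hs⟩
  refine tendsto_comp_of_locally_uniform_limit_within hG.continuousWithinAt hnhds
    fun u hu => ?_
  obtain ⟨t, ht, htu⟩ := h u hu y (mem_of_mem_nhds hs)
  exact ⟨t, ht, htu.prod_inl_nhds y⟩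

theorem tendsto_const_mul_abs_sub_nhds_zero (C t₀ : ℝ) :
    Tendsto (fun t => C * |t - t₀|) (𝓝 t₀) (𝓝 0) := by
  have h := ((continuous_id.sub (continuous_const (y := t₀))).abs.const_mul C).tendsto t₀
  simpa using h

theorem tendsto_prodMk_nhdsWithin_ne (t : ℝ) :
    Tendsto (fun s => (s, t)) (𝓝[≠] t) (𝓝[{p : ℝ × ℝ | p.1 ≠ p.2}] (t, t)) :=
  tendsto_nhdsWithin_iff.2
    ⟨(Continuous.prodMk_left t).continuousAt.tendsto.mono_left nhdsWithin_le_nhds,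
      self_mem_nhdsWithin⟩

theorem neBot_nhdsWithin_ne (t : ℝ) : NeBot (𝓝[{p : ℝ × ℝ | p.1 ≠ p.2}] (t, t)) :=
  (tendsto_prodMk_nhdsWithin_ne t).neBot

namespace IsSolutionFamily

variable {f : ℝ → ℝ} {T : Set ℝ} {U : ℝ → ℝ → ℝ} {a t₀ ρ₀ ε : ℝ}

theorem isEvenC2 (hU : IsSolutionFamily f T U) {t : ℝ} (ht : t ∈ T) : IsEvenC2 (U t) :=
  (hU.isEvenSol t ht).isEvenC2

theorem exists_eventually_abs_le (hU : IsSolutionFamily f T U) (hf : ContDiff ℝ 1 f)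
    (ht₀ : t₀ ∈ T) (ha : a ∈ Ioo 0 π) : ∃ B, ∀ᶠ t in 𝓝 t₀, ∀ ρ ∈ Icc 0 a, |U t ρ| ≤ B := by
  have hI := Icc_zero_subset_Ioo_neg_pi_pi ha.2
  have hcont₀ : ContinuousOn (U t₀) (Icc 0 a) := (hU.isEvenC2 ht₀).continuousOn.mono hI
  obtain ⟨B₀, hB₀⟩ := isCompact_Icc.exists_bound_of_continuousOn hcont₀
  obtain ⟨C, -, hC⟩ := exists_norm_jet_sub_le hf ha (B₀ + 1)
  refine ⟨B₀ + 1, ?_⟩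
  filter_upwards [hU.isOpen.mem_nhds ht₀,
    (tendsto_const_mul_abs_sub_nhds_zero 1 t₀).eventually_lt_const one_pos,
    (tendsto_const_mul_abs_sub_nhds_zero C t₀).eventually_lt_const one_pos] with t ht ht1 htC
  have hle : ∀ y ∈ Icc 0 a, |U t y - U t₀ y| < 1 → |U t y| ≤ B₀ + 1 := fun y hy h => by
    have hB := hB₀ y hy
    rw [norm_eq_abs] at hB
    linarith [abs_sub_abs_le_abs_sub (U t y) (U t₀ y)]
  have hclose : ∀ ρ ∈ Icc 0 a, |U t ρ - U t₀ ρ| < 1 := by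
    refine forall_lt_of_forall_Ico_lt
      (((hU.isEvenC2 ht).continuousOn.mono hI).sub hcont₀).abs fun ρ hρ hlt => ?_
    rcases hρ.1.eq_or_lt with rfl | hρ0
    · rwa [hU.apply_zero t ht, hU.apply_zero t₀ ht₀, ← one_mul |t - t₀|]
    · have hmem : ∀ y ∈ Ioo 0 ρ, y ∈ Icc 0 a := fun y hy => ⟨hy.1.le, hy.2.le.trans hρ.2⟩
      have hjet := hC (U t) (U t₀) (hU.isEvenSol t ht) (hU.isEvenSol t₀ ht₀) ρ ⟨hρ0, hρ.2⟩
        (fun y hy => ⟨hle y (hmem y hy) (hlt y ⟨hy.1.le, hy.2⟩),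
          (hB₀ y (hmem y hy)).trans (le_add_of_nonneg_right one_pos.le)⟩)
        ρ (right_mem_Icc.2 (by linarith))
      rw [hU.apply_zero t ht, hU.apply_zero t₀ ht₀] at hjet
      exact (norm_fst_le _).trans_lt (hjet.trans_lt htC)
  exact fun ρ hρ => hle ρ hρ (hclose ρ hρ)

theorem exists_eventually_norm_jet_sub_le (hU : IsSolutionFamily f T U) (hf : ContDiff ℝ 1 f)
    (ht₀ : t₀ ∈ T) (ha : a ∈ Ioo 0 π) : ∃ C > 0, ∀ᶠ p : ℝ × ℝ in 𝓝 (t₀, t₀),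
      ∀ ρ ∈ Icc (-a) a, ‖jet (U p.1) ρ - jet (U p.2) ρ‖ ≤ C * |p.1 - p.2| := by
  obtain ⟨B, hB⟩ := hU.exists_eventually_abs_le hf ht₀ ha
  obtain ⟨C, hC0, hC⟩ := exists_norm_jet_sub_le hf ha B
  refine ⟨C, hC0, ?_⟩
  have hgood : ∀ᶠ t in 𝓝 t₀, t ∈ T ∧ ∀ ρ ∈ Icc 0 a, |U t ρ| ≤ B :=
    (hU.isOpen.eventually_mem ht₀).and hB
  filter_upwards [continuousAt_fst.eventually hgood, continuousAt_snd.eventually hgood]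
    with p h₁ h₂ ρ hρ
  have hjet := hC (U p.1) (U p.2) (hU.isEvenSol p.1 h₁.1) (hU.isEvenSol p.2 h₂.1) a
    (right_mem_Ioc.2 ha.1)
    (fun x hx => ⟨h₁.2 x (Ioo_subset_Icc_self hx), h₂.2 x (Ioo_subset_Icc_self hx)⟩) ρ hρ
  rwa [hU.apply_zero p.1 h₁.1, hU.apply_zero p.2 h₂.1] at hjet

theorem tendstoLocallyUniformlyOn_jet (hU : IsSolutionFamily f T U) (hf : ContDiff ℝ 1 f)
    (ht₀ : t₀ ∈ T) :
    TendstoLocallyUniformlyOn (fun t => jet (U t)) (jet (U t₀)) (𝓝 t₀) (Ioo (-π) π) := by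
  refine tendstoLocallyUniformlyOn_Ioo_neg_pi_pi fun a ha => ?_
  obtain ⟨C, -, hC⟩ := hU.exists_eventually_norm_jet_sub_le hf ht₀ ha
  have hC₀ : ∀ᶠ t in 𝓝 t₀, ∀ ρ ∈ Icc (-a) a, ‖jet (U t) ρ - jet (U t₀) ρ‖ ≤ C * |t - t₀| :=
    (Continuous.prodMk_left t₀).continuousAt.eventually hC
  refine Metric.tendstoUniformlyOn_iff.2 fun ε hε => ?_
  filter_upwards [hC₀,
    (tendsto_const_mul_abs_sub_nhds_zero C t₀).eventually_lt_const hε] with t ht hlt ρ hρ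
  rw [dist_comm, dist_eq_norm]
  exact (ht ρ hρ).trans_lt hlt

theorem continuousAt_jet (hU : IsSolutionFamily f T U) (hf : ContDiff ℝ 1 f) (ht₀ : t₀ ∈ T)
    (hρ₀ : ρ₀ ∈ Ioo (-π) π) : ContinuousAt (fun p : ℝ × ℝ => jet (U p.1) p.2) (t₀, ρ₀) :=
  continuousAt_uncurry_of_tendstoLocallyUniformlyOn (hU.tendstoLocallyUniformlyOn_jet hf ht₀)
    (isOpen_Ioo.mem_nhds hρ₀)
    ((hU.isEvenC2 ht₀).continuousOn_jet.continuousAt (isOpen_Ioo.mem_nhds hρ₀))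

theorem isEvenC2_divDiff (hU : IsSolutionFamily f T U) {p : ℝ × ℝ} (h₁ : p.1 ∈ T)
    (h₂ : p.2 ∈ T) : IsEvenC2 (divDiff U p) :=
  ((hU.isEvenC2 h₁).sub (hU.isEvenC2 h₂)).const_smul _

theorem jet_divDiff (hU : IsSolutionFamily f T U) {p : ℝ × ℝ} (h₁ : p.1 ∈ T) (h₂ : p.2 ∈ T)
    (hρ₀ : ρ₀ ∈ Ioo (-π) π) :
    jet (divDiff U p) ρ₀ = (p.1 - p.2)⁻¹ • (jet (U p.1) ρ₀ - jet (U p.2) ρ₀) := by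
  rw [divDiff, jet_const_smul, (hU.isEvenC2 h₁).jet_sub (hU.isEvenC2 h₂) hρ₀]

theorem divDiff_apply_zero (hU : IsSolutionFamily f T U) {p : ℝ × ℝ} (h₁ : p.1 ∈ T)
    (h₂ : p.2 ∈ T) (hp : p.1 ≠ p.2) : divDiff U p 0 = 1 := by
  rw [divDiff, Pi.smul_apply, Pi.sub_apply, hU.apply_zero _ h₁, hU.apply_zero _ h₂, smul_eq_mul,
    inv_mul_cancel₀ (sub_ne_zero.2 hp)]

theorem eventually_mem_prod (hU : IsSolutionFamily f T U) (ht₀ : t₀ ∈ T) :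
    ∀ᶠ p : ℝ × ℝ in 𝓝 (t₀, t₀), p.1 ∈ T ∧ p.2 ∈ T :=
  prod_mem_nhds (hU.isOpen.mem_nhds ht₀) (hU.isOpen.mem_nhds ht₀)

theorem eventually_linearization_le (hU : IsSolutionFamily f T U) (hf : ContDiff ℝ 1 f)
    (ht₀ : t₀ ∈ T) (ha : a ∈ Ioo 0 π) (hε : 0 < ε) :
    ∀ᶠ p : ℝ × ℝ in 𝓝 (t₀, t₀), ∀ ρ ∈ Icc (-a) a,
      |f (U p.1 ρ) - f (U p.2 ρ) - deriv f (U t₀ ρ) * (U p.1 ρ - U p.2 ρ)| ≤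
        ε * |U p.1 ρ - U p.2 ρ| := by
  refine isCompact_Icc.eventually_forall_of_forall_eventually fun ρ hρ => ?_
  have hρI := Icc_neg_subset_Ioo_neg_pi_pi ha.2 hρ
  have hU₀ : ContinuousAt (fun p : ℝ × ℝ => U p.1 p.2) (t₀, ρ) :=
    (hU.continuousAt_jet hf ht₀ hρI).fst
  have hcomp : ∀ {g : (ℝ × ℝ) × ℝ → ℝ}, Continuous g → g ((t₀, t₀), ρ) = t₀ →
      ContinuousAt (fun z : (ℝ × ℝ) × ℝ => U (g z) z.2) ((t₀, t₀), ρ) := fun hg hgt =>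
    hU₀.comp_of_eq (hg.prodMk continuous_snd).continuousAt (Prod.ext hgt rfl)
  have hcont : ContinuousAt (fun z : (ℝ × ℝ) × ℝ => ((U z.1.1 z.2, U z.1.2 z.2), U t₀ z.2))
      ((t₀, t₀), ρ) :=
    ((hcomp (by fun_prop) rfl).prodMk (hcomp (by fun_prop) rfl)).prodMk
      (hcomp (g := fun _ => t₀) continuous_const rfl)
  exact hcont.eventually (eventually_abs_sub_sub_deriv_mul_le hf (U t₀ ρ) hε)

theorem eventually_abs_zonalLaplacian_divDiff_add_le (hU : IsSolutionFamily f T U)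
    (hf : ContDiff ℝ 1 f) (ht₀ : t₀ ∈ T) (ha : a ∈ Ioo 0 π) (hε : 0 < ε) :
    ∀ᶠ p : ℝ × ℝ in 𝓝 (t₀, t₀), ∀ ρ ∈ Icc (-a) a, ρ ≠ 0 →
      |zonalLaplacian (divDiff U p) ρ + deriv f (U t₀ ρ) * divDiff U p ρ| ≤ ε := by
  obtain ⟨C, hC0, hC⟩ := hU.exists_eventually_norm_jet_sub_le hf ht₀ ha
  filter_upwards [hU.eventually_mem_prod ht₀, hC,
    hU.eventually_linearization_le hf ht₀ ha (div_pos hε hC0)] with p hp hCp hlin ρ hρ hρ0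
  have hρI := Icc_neg_subset_Ioo_neg_pi_pi ha.2 hρ
  have heq : zonalLaplacian (divDiff U p) ρ + deriv f (U t₀ ρ) * divDiff U p ρ =
      -((p.1 - p.2)⁻¹ *
        (f (U p.1 ρ) - f (U p.2 ρ) - deriv f (U t₀ ρ) * (U p.1 ρ - U p.2 ρ))) := by
    rw [divDiff, zonalLaplacian_const_smul,
      (hU.isEvenC2 hp.1).zonalLaplacian_sub (hU.isEvenC2 hp.2) hρI,
      (hU.isEvenSol _ hp.1).zonalLaplacian_eq hρI hρ0,
      (hU.isEvenSol _ hp.2).zonalLaplacian_eq hρI hρ0, Pi.smul_apply, Pi.sub_apply, smul_eq_mul]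
    ring
  have hdiff : |U p.1 ρ - U p.2 ρ| ≤ C * |p.1 - p.2| := (norm_fst_le _).trans (hCp ρ hρ)
  rw [heq, abs_neg, abs_mul, abs_inv]
  calc |p.1 - p.2|⁻¹ * |f (U p.1 ρ) - f (U p.2 ρ) - deriv f (U t₀ ρ) * (U p.1 ρ - U p.2 ρ)|
      ≤ |p.1 - p.2|⁻¹ * (ε / C * (C * |p.1 - p.2|)) := by
        gcongr
        exact (hlin ρ hρ).trans (by gcongr)
    _ = ε * (|p.1 - p.2|⁻¹ * |p.1 - p.2|) := by field_simp
    _ ≤ ε := mul_le_of_le_one_right hε.le inv_mul_le_one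

end IsSolutionFamily

/-! ### The variation with respect to the initial value -/

theorem exists_tendstoLocallyUniformlyOn_jet {ι : Type*} {l : Filter ι} [NeBot l]
    {Z : ι → ℝ → ℝ} (hZ : ∀ᶠ i in l, IsEvenC2 (Z i))
    (hcauchy : ∀ a ∈ Ioo 0 π, UniformCauchySeqOn (fun i => jet (Z i)) l (Icc (-a) a)) :
    ∃ W, IsEvenC2 W ∧ TendstoLocallyUniformlyOn (fun i => jet (Z i)) (jet W) l (Ioo (-π) π) := by
  have hlim : ∀ ρ ∈ Ioo (-π) π, ∃ z, Tendsto (fun i => jet (Z i) ρ) l (𝓝 z) := fun ρ hρ => by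
    obtain ⟨a, ha, hmem⟩ := exists_Icc_neg_mem_nhds hρ
    exact CompleteSpace.complete ((hcauchy a ha).cauchy_map (mem_of_mem_nhds hmem))
  choose! G hG using hlim
  have hunif : TendstoLocallyUniformlyOn (fun i => jet (Z i)) G l (Ioo (-π) π) :=
    tendstoLocallyUniformlyOn_Ioo_neg_pi_pi fun a ha =>
      (hcauchy a ha).tendstoUniformlyOn_of_tendsto fun ρ hρ =>
        hG ρ (Icc_neg_subset_Ioo_neg_pi_pi ha.2 hρ)
  have hG_cont : ContinuousOn G (Ioo (-π) π) :=
    hunif.continuousOn (hZ.mono fun i hi => hi.continuousOn_jet).frequently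
  have heven : ∀ ρ ∈ Ioo (-π) π, (G (-ρ)).1 = (G ρ).1 := fun ρ hρ => by
    refine tendsto_nhds_unique_of_eventuallyEq (hG (-ρ) ⟨neg_lt_neg hρ.2, neg_lt.1 hρ.1⟩).fst_nhds
      (hG ρ hρ).fst_nhds ?_
    filter_upwards [hZ] with i hi using hi.even ρ hρ
  have hderiv : ∀ ρ ∈ Ioo (-π) π, HasDerivAt (fun ρ => (G ρ).1) (G ρ).2.1 ρ := fun ρ hρ =>
    hasDerivAt_of_tendstoLocallyUniformlyOn (f := Z) isOpen_Ioo
      ((uniformContinuous_fst.comp uniformContinuous_snd).comp_tendstoLocallyUniformlyOn hunif)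
      (hZ.mono fun i hi x => hi.hasDerivAt) (fun x hx => (hG x hx).fst_nhds) hρ
  have hderiv₂ : ∀ ρ ∈ Ioo (-π) π, HasDerivAt (fun ρ => (G ρ).2.1) (G ρ).2.2 ρ := fun ρ hρ =>
    hasDerivAt_of_tendstoLocallyUniformlyOn (f := fun i => deriv (Z i)) isOpen_Ioo
      ((uniformContinuous_snd.comp uniformContinuous_snd).comp_tendstoLocallyUniformlyOn hunif)
      (hZ.mono fun i hi x => hi.hasDerivAt_deriv) (fun x hx => (hG x hx).snd_nhds.fst_nhds) hρ
  obtain ⟨hW, hjet⟩ := IsEvenC2.of_hasDerivAt heven hderiv hderiv₂ hG_cont.snd.snd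
  exact ⟨fun ρ => (G ρ).1, hW, hunif.congr_right fun ρ hρ => (hjet ρ hρ).symm⟩

theorem abs_sub_le_of_abs_add_mul_le {k K x y u v δ ε : ℝ} (hk : |k| ≤ K)
    (hx : |x + k * u| ≤ δ) (hy : |y + k * v| ≤ ε) : |x - y| ≤ K * |u - v| + (δ + ε) :=
  calc |x - y| = |x + k * u - (y + k * v) - k * (u - v)| := by ring_nf
    _ ≤ |x + k * u| + |y + k * v| + |k| * |u - v| := by
        rw [← abs_mul]
        exact (abs_sub _ _).trans (add_le_add_left (abs_sub _ _) _)
    _ ≤ δ + ε + K * |u - v| := by gcongr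
    _ = K * |u - v| + (δ + ε) := add_comm _ _

/-- `W` is the derivative of the family `U` with respect to its parameter at `t₀`. The divided
differences `divDiff U p` converge to it in `C²` as both components of `p` tend to `t₀`
independently, which makes `W` depend continuously on `t₀`. -/
structure IsVariation (U : ℝ → ℝ → ℝ) (t₀ : ℝ) (W : ℝ → ℝ) : Prop where
  isEvenC2 : IsEvenC2 W
  tendsto : TendstoLocallyUniformlyOn (fun p => jet (divDiff U p)) (jet W)
    (𝓝[{p | p.1 ≠ p.2}] (t₀, t₀)) (Ioo (-π) π)

namespace IsSolutionFamily

variable {f : ℝ → ℝ} {T : Set ℝ} {U : ℝ → ℝ → ℝ} {a t₀ : ℝ}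

theorem uniformCauchySeqOn_jet_divDiff (hU : IsSolutionFamily f T U) (hf : ContDiff ℝ 1 f)
    (ht₀ : t₀ ∈ T) (ha : a ∈ Ioo 0 π) :
    UniformCauchySeqOn (fun p => jet (divDiff U p)) (𝓝[{p | p.1 ≠ p.2}] (t₀, t₀))
      (Icc (-a) a) := by
  have hI := Icc_neg_subset_Ioo_neg_pi_pi ha.2
  obtain ⟨K, hK⟩ := isCompact_Icc.exists_bound_of_continuousOn (f := fun ρ => deriv f (U t₀ ρ))
    ((hf.continuous_deriv le_rfl).comp_continuousOn ((hU.isEvenC2 ht₀).continuousOn.mono hI))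
  have hK0 : 0 ≤ K := (norm_nonneg _).trans (hK 0 ⟨neg_nonpos.2 ha.1.le, ha.1.le⟩)
  obtain ⟨C, hC0, hC⟩ := exists_norm_jet_le ha.1 ha.2 hK0
  rw [SeminormedAddGroup.uniformCauchySeqOn_iff_tendstoUniformlyOn_zero,
    Metric.tendstoUniformlyOn_iff]
  intro ε hε
  have hgood : ∀ᶠ p : ℝ × ℝ in 𝓝[{p | p.1 ≠ p.2}] (t₀, t₀), IsEvenC2 (divDiff U p) ∧
      divDiff U p 0 = 1 ∧ ∀ ρ ∈ Icc (-a) a, ρ ≠ 0 →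
        |zonalLaplacian (divDiff U p) ρ + deriv f (U t₀ ρ) * divDiff U p ρ| ≤ ε / (4 * C) := by
    filter_upwards [self_mem_nhdsWithin, nhdsWithin_le_nhds (hU.eventually_mem_prod ht₀),
      nhdsWithin_le_nhds (hU.eventually_abs_zonalLaplacian_divDiff_add_le hf ht₀ ha
        (ε := ε / (4 * C)) (by positivity))] with p hne hp hlin
    exact ⟨hU.isEvenC2_divDiff hp.1 hp.2, hU.divDiff_apply_zero hp.1 hp.2 hne, hlin⟩
  filter_upwards [hgood.prod_mk hgood] with pq ⟨⟨hp, hp0, hpL⟩, ⟨hq, hq0, hqL⟩⟩ ρ hρ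
  have hbound := hC _ (hq.sub hp) (2 * (ε / (4 * C))) (by positivity) a (right_mem_Ioc.2 ha.1)
    (fun x hx => ?_) ρ hρ
  · rw [Pi.zero_apply, dist_zero_left, neg_add_eq_sub, ← hq.jet_sub hp (hI hρ)]
    refine hbound.trans_lt ?_
    rw [Pi.sub_apply, hq0, hp0, sub_self, abs_zero, zero_add]
    field_simp
    norm_num
  · have hxa : x ∈ Icc (-a) a := ⟨by linarith [hx.1, hx.2], hx.2.le⟩
    rw [hq.zonalLaplacian_sub hp (hI hxa), Pi.sub_apply, two_mul]
    exact abs_sub_le_of_abs_add_mul_le (hK x hxa) (hqL x hxa hx.1.ne') (hpL x hxa hx.1.ne')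

theorem exists_isVariation (hU : IsSolutionFamily f T U) (hf : ContDiff ℝ 1 f) (ht₀ : t₀ ∈ T) :
    ∃ W, IsVariation U t₀ W := by
  have := neBot_nhdsWithin_ne t₀
  obtain ⟨W, hW, hlim⟩ := exists_tendstoLocallyUniformlyOn_jet
    (((hU.eventually_mem_prod ht₀).filter_mono nhdsWithin_le_nhds).mono fun p hp =>
      hU.isEvenC2_divDiff hp.1 hp.2)
    (fun a ha => hU.uniformCauchySeqOn_jet_divDiff hf ht₀ ha)
  exact ⟨W, hW, hlim⟩

end IsSolutionFamily

namespace IsVariation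

variable {f : ℝ → ℝ} {T : Set ℝ} {U : ℝ → ℝ → ℝ} {W : ℝ → ℝ} {t₀ ρ : ℝ}

theorem hasDerivAt_jet (hW : IsVariation U t₀ W) (hU : IsSolutionFamily f T U) (ht₀ : t₀ ∈ T)
    (hρ : ρ ∈ Ioo (-π) π) : HasDerivAt (fun t => jet (U t) ρ) (jet W ρ) t₀ := by
  rw [hasDerivAt_iff_tendsto_slope]
  refine ((hW.tendsto.tendsto_at hρ).comp (tendsto_prodMk_nhdsWithin_ne t₀)).congr' ?_
  filter_upwards [nhdsWithin_le_nhds (hU.isOpen.mem_nhds ht₀)] with t ht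
  exact hU.jet_divDiff ht ht₀ hρ

theorem apply_zero (hW : IsVariation U t₀ W) (hU : IsSolutionFamily f T U) (ht₀ : t₀ ∈ T) :
    W 0 = 1 := by
  have hid : (fun t => U t 0) =ᶠ[𝓝 t₀] id :=
    (hU.isOpen.eventually_mem ht₀).mono hU.apply_zero
  have hjet := hW.hasDerivAt_jet hU ht₀ zero_mem_Ioo_neg_pi_pi
  have hfst : HasDerivAt (fun t => U t 0) (W 0) t₀ := hjet.fst
  exact (hfst.congr_of_eventuallyEq hid.symm).unique (hasDerivAt_id t₀)

theorem zonalLaplacian_eq (hW : IsVariation U t₀ W) (hU : IsSolutionFamily f T U)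
    (hf : ContDiff ℝ 1 f) (ht₀ : t₀ ∈ T) (hρ : ρ ∈ Ioo (-π) π) (hρ0 : ρ ≠ 0) :
    zonalLaplacian W ρ = -(deriv f (U t₀ ρ) * W ρ) := by
  have := neBot_nhdsWithin_ne t₀
  have hjet := hW.tendsto.tendsto_at hρ
  have hlim : Tendsto (fun p => |zonalLaplacian (divDiff U p) ρ
      + deriv f (U t₀ ρ) * divDiff U p ρ|) (𝓝[{p | p.1 ≠ p.2}] (t₀, t₀))
      (𝓝 |zonalLaplacian W ρ + deriv f (U t₀ ρ) * W ρ|) :=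
    ((hjet.snd_nhds.snd_nhds.add (hjet.snd_nhds.fst_nhds.const_mul _)).add
      (hjet.fst_nhds.const_mul _)).abs
  obtain ⟨a, ha, hmem⟩ := exists_Icc_neg_mem_nhds hρ
  have hzero : |zonalLaplacian W ρ + deriv f (U t₀ ρ) * W ρ| ≤ 0 :=
    le_of_forall_gt_imp_ge_of_dense fun ε hε => le_of_tendsto hlim <| by
      filter_upwards [nhdsWithin_le_nhds
        (hU.eventually_abs_zonalLaplacian_divDiff_add_le hf ht₀ ha hε)] with p hp
      exact hp ρ (mem_of_mem_nhds hmem) hρ0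
  exact eq_neg_of_add_eq_zero_left (abs_nonpos_iff.1 hzero)

end IsVariation

section Family

variable {f : ℝ → ℝ} {T : Set ℝ} {U W : ℝ → ℝ → ℝ} {t₀ ρ₀ : ℝ}

theorem tendstoLocallyUniformlyOn_jet_variation (hU : IsSolutionFamily f T U)
    (hW : ∀ t ∈ T, IsVariation U t (W t)) (ht₀ : t₀ ∈ T) :
    TendstoLocallyUniformlyOn (fun t => jet (W t)) (jet (W t₀)) (𝓝 t₀) (Ioo (-π) π) := by
  refine tendstoLocallyUniformlyOn_Ioo_neg_pi_pi fun a ha => ?_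
  have hI := Icc_neg_subset_Ioo_neg_pi_pi ha.2
  have hunif := (tendstoLocallyUniformlyOn_iff_forall_isCompact isOpen_Ioo).1
    (hW t₀ ht₀).tendsto (Icc (-a) a) hI isCompact_Icc
  refine Metric.tendstoUniformlyOn_iff.2 fun ε hε => ?_
  have hnear := eventually_eventually_nhds.2 (eventually_nhdsWithin_iff.1
    (Metric.tendstoUniformlyOn_iff.1 hunif (ε / 2) (half_pos hε)))
  filter_upwards [hU.isOpen.mem_nhds ht₀,
    (continuous_id.prodMk continuous_id).continuousAt.eventually hnear] with t ht htnear ρ hρ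
  have := neBot_nhdsWithin_ne t
  refine (le_of_tendsto (tendsto_const_nhds.dist ((hW t ht).tendsto.tendsto_at (hI hρ)))
    ?_).trans_lt (half_lt_self hε)
  exact (eventually_nhdsWithin_iff.2 htnear).mono fun p hp => (hp ρ hρ).le

theorem continuousAt_jet_variation (hU : IsSolutionFamily f T U)
    (hW : ∀ t ∈ T, IsVariation U t (W t)) (ht₀ : t₀ ∈ T) (hρ₀ : ρ₀ ∈ Ioo (-π) π) :
    ContinuousAt (fun p : ℝ × ℝ => jet (W p.1) p.2) (t₀, ρ₀) :=
  continuousAt_uncurry_of_tendstoLocallyUniformlyOn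
    (tendstoLocallyUniformlyOn_jet_variation hU hW ht₀) (isOpen_Ioo.mem_nhds hρ₀)
    ((hW t₀ ht₀).isEvenC2.continuousOn_jet.continuousAt (isOpen_Ioo.mem_nhds hρ₀))

end Family

/-! ### The phase map -/

/-- The map `F(t, ρ) = (U_t(ρ), U_t'(ρ))` into the phase plane. -/
noncomputable def phaseMap (U : ℝ → ℝ → ℝ) (p : ℝ × ℝ) : ℝ × ℝ :=
  (U p.1 p.2, deriv (U p.1) p.2)

/-- The Wronskian `Z V' - Z' V`. For `Z = ∂U/∂t` and `V = U'` it is the determinant of the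
differential of `phaseMap U`. -/
noncomputable def wronskian (Z V : ℝ → ℝ) (ρ : ℝ) : ℝ :=
  Z ρ * deriv V ρ - deriv Z ρ * V ρ

theorem exists_equiv_coprod_toSpanSingleton {𝕜 : Type*} [NontriviallyNormedField 𝕜]
    {v w : 𝕜 × 𝕜} (h : v.1 * w.2 - v.2 * w.1 ≠ 0) :
    ∃ L : (𝕜 × 𝕜) ≃L[𝕜] 𝕜 × 𝕜, (L : 𝕜 × 𝕜 →L[𝕜] 𝕜 × 𝕜) =
      (ContinuousLinearMap.toSpanSingleton 𝕜 v).coprod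
        (ContinuousLinearMap.toSpanSingleton 𝕜 w) := by
  let M := (ContinuousLinearMap.toSpanSingleton 𝕜 v).coprod
    (ContinuousLinearMap.toSpanSingleton 𝕜 w)
  let adj := (ContinuousLinearMap.toSpanSingleton 𝕜 (w.2, -v.2)).coprod
    (ContinuousLinearMap.toSpanSingleton 𝕜 (-w.1, v.1))
  have hleft : ∀ p, adj (M p) = (v.1 * w.2 - v.2 * w.1) • p := fun p => by
    ext <;> simp [M, adj] <;> ring
  have hright : ∀ p, M (adj p) = (v.1 * w.2 - v.2 * w.1) • p := fun p => by
    ext <;> simp [M, adj] <;> ring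
  refine ⟨ContinuousLinearEquiv.equivOfInverse M ((v.1 * w.2 - v.2 * w.1)⁻¹ • adj)
    (fun p => ?_) (fun p => ?_), rfl⟩
  · rw [smul_apply, hleft, inv_smul_smul₀ h]
  · rw [smul_apply, map_smul, hright, inv_smul_smul₀ h]

section PhaseMap

variable {f : ℝ → ℝ} {T : Set ℝ} {U W : ℝ → ℝ → ℝ} {p : ℝ × ℝ}

theorem hasStrictFDerivAt_phaseMap (hU : IsSolutionFamily f T U) (hf : ContDiff ℝ 1 f)
    (hW : ∀ t ∈ T, IsVariation U t (W t)) (hp : p ∈ T ×ˢ Ioo (-π) π) :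
    HasStrictFDerivAt (phaseMap U)
      ((ContinuousLinearMap.toSpanSingleton ℝ (phaseMap W p)).coprod
        (ContinuousLinearMap.toSpanSingleton ℝ
          (deriv (U p.1) p.2, deriv (deriv (U p.1)) p.2))) p := by
  have hspan : Continuous fun z : ℝ × ℝ => ContinuousLinearMap.toSpanSingleton ℝ z :=
    (ContinuousLinearMap.toSpanSingletonCLE (𝕜 := ℝ) (E := ℝ × ℝ)).continuous
  have hnear : ∀ᶠ q : ℝ × ℝ in 𝓝 p, q ∈ T ×ˢ Ioo (-π) π :=
    (hU.isOpen.prod isOpen_Ioo).eventually_mem hp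
  have hUjet := hU.continuousAt_jet hf hp.1 hp.2
  have hWjet := continuousAt_jet_variation hU hW hp.1 hp.2
  refine hasStrictFDerivAt_uncurry_coprod (f := fun t ρ => phaseMap U (t, ρ))
    (f₁ := fun t ρ => ContinuousLinearMap.toSpanSingleton ℝ (phaseMap W (t, ρ)))
    (f₂ := fun t ρ => ContinuousLinearMap.toSpanSingleton ℝ
      (deriv (U t) ρ, deriv (deriv (U t)) ρ)) ?_ ?_ ?_ ?_
  · filter_upwards [hnear] with q hq
    have hderiv := (hW q.1 hq.1).hasDerivAt_jet hU hq.1 hq.2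
    have hphase : HasDerivAt (fun t => phaseMap U (t, q.2)) (phaseMap W q) q.1 :=
      hderiv.fst.prodMk hderiv.snd.fst
    exact hphase.hasFDerivAt
  · filter_upwards [hnear] with q hq
    have hq1 := hU.isEvenC2 hq.1
    exact ((hq1.hasDerivAt hq.2).prodMk (hq1.hasDerivAt_deriv hq.2)).hasFDerivAt
  · exact hspan.continuousAt.comp (hWjet.fst.prodMk hWjet.snd.fst)
  · exact hspan.continuousAt.comp (hUjet.snd.fst.prodMk hUjet.snd.snd)

theorem exists_equiv_hasStrictFDerivAt_phaseMap (hU : IsSolutionFamily f T U)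
    (hf : ContDiff ℝ 1 f) (hW : ∀ t ∈ T, IsVariation U t (W t)) (hp : p ∈ T ×ˢ Ioo (-π) π)
    (hJ : wronskian (W p.1) (deriv (U p.1)) p.2 ≠ 0) :
    ∃ L : (ℝ × ℝ) ≃L[ℝ] ℝ × ℝ,
      HasStrictFDerivAt (phaseMap U) (L : ℝ × ℝ →L[ℝ] ℝ × ℝ) p := by
  obtain ⟨L, hL⟩ := exists_equiv_coprod_toSpanSingleton (v := phaseMap W p)
    (w := (deriv (U p.1) p.2, deriv (deriv (U p.1)) p.2)) hJ
  exact ⟨L, hL ▸ hasStrictFDerivAt_phaseMap hU hf hW hp⟩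

theorem continuousAt_wronskian_variation (hU : IsSolutionFamily f T U) (hf : ContDiff ℝ 1 f)
    (hW : ∀ t ∈ T, IsVariation U t (W t)) (hp : p ∈ T ×ˢ Ioo (-π) π) :
    ContinuousAt (fun q : ℝ × ℝ => wronskian (W q.1) (deriv (U q.1)) q.2) p := by
  have hUjet := hU.continuousAt_jet hf hp.1 hp.2
  have hWjet := continuousAt_jet_variation hU hW hp.1 hp.2
  exact (hWjet.fst.mul hUjet.snd.snd).sub (hWjet.snd.fst.mul hUjet.snd.fst)

end PhaseMap

/-! ### Sign of the Jacobian -/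

theorem hasDerivAt_sin_mul_wronskian {Z V : ℝ → ℝ} {ρ z v : ℝ} (hZ : DifferentiableAt ℝ Z ρ)
    (hZ' : HasDerivAt (deriv Z) z ρ) (hV : DifferentiableAt ℝ V ρ)
    (hV' : HasDerivAt (deriv V) v ρ) (hsin : sin ρ ≠ 0) :
    HasDerivAt (fun x => sin x * wronskian Z V x)
      (sin ρ * (Z ρ * zonalLaplacian V ρ - zonalLaplacian Z ρ * V ρ)) ρ := by
  refine ((hasDerivAt_sin ρ).mul ((hZ.hasDerivAt.mul hV').sub
    (hZ'.mul hV.hasDerivAt))).congr_deriv ?_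
  rw [zonalLaplacian, zonalLaplacian, hZ'.deriv, hV'.deriv]
  simp only [Pi.mul_apply, Pi.sub_apply]
  field_simp
  ring

theorem pos_of_forall_ne_zero {u : ℝ → ℝ} {r : ℝ} (hu : ContinuousOn u (Ico 0 r))
    (hu0 : 0 < u 0) (hne : ∀ ρ ∈ Ioo 0 r, u ρ ≠ 0) : ∀ ρ ∈ Ico 0 r, 0 < u ρ := by
  intro ρ hρ
  by_contra! hneg
  have hsub : Icc 0 ρ ⊆ Ico 0 r := fun x hx => ⟨hx.1, hx.2.trans_lt hρ.2⟩
  obtain ⟨x, hx, hux⟩ := intermediate_value_Icc' hρ.1 (hu.mono hsub) ⟨hneg, hu0.le⟩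
  rcases hx.1.eq_or_lt with rfl | hx0
  · exact hu0.ne' hux
  · exact hne x ⟨hx0, hx.2.trans_lt hρ.2⟩ hux

namespace IsEvenC2

variable {Z V : ℝ → ℝ} {b ρ : ℝ}

theorem continuousOn_sin_mul_wronskian (hZ : IsEvenC2 Z) (hV : IsEvenC2 V) :
    ContinuousOn (fun x => sin x * wronskian Z V x) (Ioo (-π) π) :=
  continuous_sin.continuousOn.mul <|
    (hZ.continuousOn.mul hV.contDiffOn_deriv.continuousOn).sub
      (hZ.contDiffOn_deriv.continuousOn.mul hV.continuousOn)

theorem wronskian_nonneg (hZ : IsEvenC2 Z) (hV : IsEvenC2 V) (hbπ : b < π)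
    (h : ∀ ρ ∈ Ioo 0 b, zonalLaplacian Z ρ * V ρ ≤ Z ρ * zonalLaplacian V ρ) :
    ∀ ρ ∈ Icc 0 b, 0 ≤ wronskian Z V ρ := by
  intro ρ hρ
  rcases hρ.1.eq_or_lt with rfl | hρ0
  · simp [wronskian, hZ.deriv_zero, hV.deriv_zero]
  have hI := Icc_zero_subset_Ioo_neg_pi_pi hbπ
  have hmono : MonotoneOn (fun x => sin x * wronskian Z V x) (Icc 0 b) := by
    refine monotoneOn_of_hasDerivWithinAt_nonneg
      (f' := fun x => sin x * (Z x * zonalLaplacian V x - zonalLaplacian Z x * V x))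
      (convex_Icc 0 b) ((hZ.continuousOn_sin_mul_wronskian hV).mono hI) ?_ ?_ <;>
    rw [interior_Icc] <;>
    intro x hx <;>
    have hsin : 0 < sin x := sin_pos_of_pos_of_lt_pi hx.1 (hx.2.trans hbπ)
    · have hxI := hI (Ioo_subset_Icc_self hx)
      exact (hasDerivAt_sin_mul_wronskian (hZ.hasDerivAt hxI).differentiableAt
        (hZ.hasDerivAt_deriv hxI) (hV.hasDerivAt hxI).differentiableAt
        (hV.hasDerivAt_deriv hxI) hsin.ne').hasDerivWithinAt
    · exact mul_nonneg hsin.le (sub_nonneg.2 (h x hx))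
  have hle := hmono (left_mem_Icc.2 (hρ.1.trans hρ.2)) hρ hρ0.le
  simp only [sin_zero, zero_mul] at hle
  exact nonneg_of_mul_nonneg_right hle (sin_pos_of_pos_of_lt_pi hρ0 (hρ.2.trans_lt hbπ))

theorem monotoneOn_div (hZ : IsEvenC2 Z) (hV : IsEvenC2 V) (hbπ : b < π)
    (hpos : ∀ ρ ∈ Icc 0 b, 0 < Z ρ) (hW : ∀ ρ ∈ Icc 0 b, 0 ≤ wronskian Z V ρ) :
    MonotoneOn (fun ρ => V ρ / Z ρ) (Icc 0 b) := by
  have hI := Icc_zero_subset_Ioo_neg_pi_pi hbπ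
  have hderiv : ∀ x ∈ Icc 0 b,
      HasDerivAt (fun ρ => V ρ / Z ρ) (wronskian Z V x / Z x ^ 2) x := fun x hx => by
    refine ((hV.hasDerivAt (hI hx)).div (hZ.hasDerivAt (hI hx)) (hpos x hx).ne').congr_deriv ?_
    rw [wronskian]
    ring
  refine monotoneOn_of_hasDerivWithinAt_nonneg (f' := fun x => wronskian Z V x / Z x ^ 2)
    (convex_Icc 0 b)
    (fun x hx => (hderiv x hx).continuousAt.continuousWithinAt)
    (fun x hx => (hderiv x (interior_subset hx)).hasDerivWithinAt)
    fun x hx => div_nonneg (hW x (interior_subset hx)) (sq_nonneg _)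

end IsEvenC2

/-- `r` is the smallest zero of `u` in `(0, π)`. -/
structure IsFirstZero (u : ℝ → ℝ) (r : ℝ) : Prop where
  mem : r ∈ Ioo 0 π
  apply_eq : u r = 0
  ne_zero : ∀ ρ ∈ Ioo 0 r, u ρ ≠ 0

namespace IsEvenSol

variable {f u W : ℝ → ℝ} {r ρ : ℝ}

theorem two_mul_deriv_deriv_zero (hu : IsEvenSol f u) (hf : Continuous f) :
    2 * deriv (deriv u) 0 = -f (u 0) := by
  have hcont : ContinuousAt u 0 :=
    (hu.isEvenC2.hasDerivAt zero_mem_Ioo_neg_pi_pi).continuousAt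
  have hlim : Tendsto (fun ρ => -f (u ρ)) (𝓝[≠] 0) (𝓝 (-f (u 0))) :=
    ((hf.continuousAt.comp hcont).neg).tendsto.mono_left nhdsWithin_le_nhds
  refine tendsto_nhds_unique (hu.isEvenC2.tendsto_zonalLaplacian) (hlim.congr' ?_)
  filter_upwards [self_mem_nhdsWithin,
    nhdsWithin_le_nhds (isOpen_Ioo.mem_nhds zero_mem_Ioo_neg_pi_pi)] with ρ hρ0 hρ
  exact (hu.zonalLaplacian_eq hρ hρ0).symm

theorem deriv_neg_of_pos (hu : IsEvenSol f u) (hf : ∀ x > 0, 0 < f x) (hrπ : r < π)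
    (hpos : ∀ ρ ∈ Ico 0 r, 0 < u ρ) : ∀ ρ ∈ Ioc 0 r, deriv u ρ < 0 := by
  intro ρ hρ
  have hI := Icc_zero_subset_Ioo_neg_pi_pi hrπ
  have hderiv : ∀ x ∈ Icc 0 r,
      HasDerivAt (fun x => sin x * deriv u x) (sin x * zonalLaplacian u x) x := fun x hx =>
    hu.isEvenC2.hasDerivAt_sin_mul_deriv (hI hx)
  have hanti : StrictAntiOn (fun x => sin x * deriv u x) (Icc 0 r) := by
    refine strictAntiOn_of_hasDerivWithinAt_neg (convex_Icc 0 r)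
      (fun x hx => (hderiv x hx).continuousAt.continuousWithinAt)
      (fun x hx => (hderiv x (interior_subset hx)).hasDerivWithinAt) fun x hx => ?_
    rw [interior_Icc] at hx
    rw [hu.zonalLaplacian_eq (hI (Ioo_subset_Icc_self hx)) hx.1.ne']
    exact mul_neg_of_pos_of_neg (sin_pos_of_pos_of_lt_pi hx.1 (hx.2.trans hrπ))
      (neg_neg_of_pos (hf _ (hpos x (Ioo_subset_Ico_self hx))))
  have hlt := hanti (left_mem_Icc.2 (hρ.1.le.trans hρ.2)) (Ioc_subset_Icc_self hρ) hρ.1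
  simp only [sin_zero, zero_mul] at hlt
  exact neg_of_mul_neg_right hlt (sin_pos_of_pos_of_lt_pi hρ.1 (hρ.2.trans_lt hrπ)).le

theorem hasDerivAt_deriv_deriv (hu : IsEvenSol f u) (hf : Differentiable ℝ f)
    (hρ : ρ ∈ Ioo (-π) π) (hρ0 : ρ ≠ 0) :
    HasDerivAt (deriv (deriv u))
      ((1 / sin ρ ^ 2 - deriv f (u ρ)) * deriv u ρ - cos ρ / sin ρ * deriv (deriv u) ρ) ρ := by
  have hsin := sin_ne_zero_of_mem_Ioo hρ hρ0
  have heq : deriv (deriv u) =ᶠ[𝓝 ρ] fun x => -f (u x) - cos x / sin x * deriv u x := by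
    filter_upwards [isOpen_Ioo.mem_nhds hρ, isOpen_ne.mem_nhds hρ0] with x hx hx0
    rw [← hu.zonalLaplacian_eq hx hx0, zonalLaplacian, add_sub_cancel_right]
  have hfu : HasDerivAt (fun x => f (u x)) (deriv f (u ρ) * deriv u ρ) ρ :=
    (hf (u ρ)).hasDerivAt.comp ρ (hu.isEvenC2.hasDerivAt hρ)
  have hcot : HasDerivAt (fun x => cos x / sin x) (-(1 / sin ρ ^ 2)) ρ := by
    refine ((hasDerivAt_cos ρ).div (hasDerivAt_sin ρ) hsin).congr_deriv ?_
    field_simp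
    linarith [sin_sq_add_cos_sq ρ]
  refine HasDerivAt.congr_of_eventuallyEq ?_ heq
  exact (hfu.neg.sub (hcot.mul (hu.isEvenC2.hasDerivAt_deriv hρ))).congr_deriv (by ring)

theorem zonalLaplacian_deriv (hu : IsEvenSol f u) (hf : Differentiable ℝ f)
    (hρ : ρ ∈ Ioo (-π) π) (hρ0 : ρ ≠ 0) :
    zonalLaplacian (deriv u) ρ = (1 / sin ρ ^ 2 - deriv f (u ρ)) * deriv u ρ := by
  rw [zonalLaplacian, (hu.hasDerivAt_deriv_deriv hf hρ hρ0).deriv, sub_add_cancel]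

/-- Comparison with `u` itself: `f (u) / u ≥ f' (u)`, so `W / u` cannot decrease. -/
theorem variation_pos (hu : IsEvenSol f u) (hf : ∀ x > 0, x * deriv f x ≤ f x) (hrπ : r < π)
    (hpos : ∀ ρ ∈ Ico 0 r, 0 < u ρ) (hW : IsEvenC2 W) (hW0 : 0 < W 0)
    (hLW : ∀ ρ ∈ Ioo 0 r, zonalLaplacian W ρ = -(deriv f (u ρ) * W ρ)) :
    ∀ ρ ∈ Ico 0 r, 0 < W ρ := by
  intro ρ hρ
  have hI := Icc_zero_subset_Ioo_neg_pi_pi (hρ.2.trans hrπ)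
  refine neg_neg_iff_pos.1 (forall_lt_of_forall_Ico_lt (g := fun x => -W x)
    (hW.continuousOn.mono hI).neg (fun b hb hlt => ?_) ρ (right_mem_Icc.2 hρ.1))
  have hbr : b < r := hb.2.trans_lt hρ.2
  have hwronskian : ∀ x ∈ Icc 0 b, 0 ≤ wronskian u W x :=
    hu.isEvenC2.wronskian_nonneg hW (hbr.trans hrπ) fun x hx => by
      have hxr : x < r := hx.2.trans hbr
      have hux := hpos x ⟨hx.1.le, hxr⟩
      have hWx : 0 < W x := neg_neg_iff_pos.1 (hlt x ⟨hx.1.le, hx.2⟩)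
      rw [hLW x ⟨hx.1, hxr⟩, hu.zonalLaplacian_eq
        (hI ⟨hx.1.le, hx.2.le.trans hb.2⟩) hx.1.ne']
      nlinarith [mul_le_mul_of_nonneg_right (hf _ hux) hWx.le]
  have hmono := hu.isEvenC2.monotoneOn_div hW (hbr.trans hrπ)
    (fun x hx => hpos x ⟨hx.1, hx.2.trans_lt hbr⟩) hwronskian
  have hquot := hmono (left_mem_Icc.2 hb.1) (right_mem_Icc.2 hb.1) hb.1
  have hquot0 : 0 < W 0 / u 0 := div_pos hW0 (hpos 0 ⟨le_rfl, hb.1.trans_lt hbr⟩)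
  exact neg_neg_of_pos ((div_pos_iff_of_pos_right (hpos b ⟨hb.1, hbr⟩)).1
    (hquot0.trans_le hquot))

theorem wronskian_deriv_neg_of_pos (hu : IsEvenSol f u) (hf : Differentiable ℝ f) (hrπ : r < π)
    (hu' : ∀ ρ ∈ Ioo 0 r, deriv u ρ < 0) (hW : IsEvenC2 W) (hWpos : ∀ ρ ∈ Ioo 0 r, 0 < W ρ)
    (hLW : ∀ ρ ∈ Ioo 0 r, zonalLaplacian W ρ = -(deriv f (u ρ) * W ρ)) :
    ∀ ρ ∈ Ioc 0 r, wronskian W (deriv u) ρ < 0 := by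
  intro ρ hρ
  have hI := Icc_zero_subset_Ioo_neg_pi_pi hrπ
  have hcont : ContinuousOn (fun x => sin x * wronskian W (deriv u) x) (Icc 0 r) := by
    have hWjet := hW.continuousOn_jet
    have hujet := hu.isEvenC2.continuousOn_jet
    exact (continuous_sin.continuousOn.mul
      ((hWjet.fst.mul hujet.snd.snd).sub (hWjet.snd.fst.mul hujet.snd.fst))).mono hI
  have hderiv : ∀ x ∈ Ioo 0 r, HasDerivAt (fun x => sin x * wronskian W (deriv u) x)
      (W x * deriv u x / sin x) x := fun x hx => by
    have hxI := hI (Ioo_subset_Icc_self hx)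
    have hsin : sin x ≠ 0 := sin_ne_zero_of_mem_Ioo hxI hx.1.ne'
    refine (hasDerivAt_sin_mul_wronskian (hW.hasDerivAt hxI).differentiableAt
      (hW.hasDerivAt_deriv hxI) (hu.isEvenC2.hasDerivAt_deriv hxI).differentiableAt
      (hu.hasDerivAt_deriv_deriv hf hxI hx.1.ne') hsin).congr_deriv ?_
    rw [hu.zonalLaplacian_deriv hf hxI hx.1.ne', hLW x hx]
    field_simp
    ring
  have hanti : StrictAntiOn (fun x => sin x * wronskian W (deriv u) x) (Icc 0 r) := by
    refine strictAntiOn_of_hasDerivWithinAt_neg (f' := fun x => W x * deriv u x / sin x)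
      (convex_Icc 0 r) hcont ?_ ?_ <;>
    rw [interior_Icc] <;>
    intro x hx
    · exact (hderiv x hx).hasDerivWithinAt
    · exact div_neg_of_neg_of_pos (mul_neg_of_pos_of_neg (hWpos x hx) (hu' x hx))
        (sin_pos_of_pos_of_lt_pi hx.1 (hx.2.trans hrπ))
  have hlt := hanti (left_mem_Icc.2 (hρ.1.le.trans hρ.2)) (Ioc_subset_Icc_self hρ) hρ.1
  simp only [sin_zero, zero_mul] at hlt
  exact neg_of_mul_neg_right hlt (sin_pos_of_pos_of_lt_pi hρ.1 (hρ.2.trans_lt hrπ)).le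

theorem wronskian_deriv_neg (hu : IsEvenSol f u) (hf : Differentiable ℝ f) (hrπ : r < π)
    (hf0 : 0 < f (u 0)) (hu' : ∀ ρ ∈ Ioo 0 r, deriv u ρ < 0) (hW : IsEvenC2 W)
    (hW0 : 0 < W 0) (hWpos : ∀ ρ ∈ Ioo 0 r, 0 < W ρ)
    (hLW : ∀ ρ ∈ Ioo 0 r, zonalLaplacian W ρ = -(deriv f (u ρ) * W ρ)) :
    ∀ ρ ∈ Icc (-r) r, wronskian W (deriv u) ρ < 0 := by
  have hpos := hu.wronskian_deriv_neg_of_pos hf hrπ hu' hW hWpos hLW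
  intro ρ hρ
  rcases lt_trichotomy ρ 0 with hneg | rfl | hρ0
  · have hρI := Icc_neg_subset_Ioo_neg_pi_pi hrπ hρ
    have h := hpos (-ρ) ⟨neg_pos.2 hneg, neg_le.1 hρ.1⟩
    rwa [wronskian, hW.even ρ hρI, hW.deriv_neg hρI, hu.isEvenC2.deriv_neg hρI,
      hu.isEvenC2.deriv_deriv_neg hρI, neg_mul_neg] at h
  · have h := hu.two_mul_deriv_deriv_zero hf.continuous
    rw [wronskian, hW.deriv_zero, zero_mul, sub_zero]
    exact mul_neg_of_pos_of_neg hW0 (by linarith)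
  · exact hpos ρ ⟨hρ0, hρ.2⟩

end IsEvenSol

/-- The setting of the theorem: `f` satisfies hypothesis (H), `U t` is for each `t > 0` the even
solution with `U t 0 = t`, and `r t` is its first zero. -/
structure IsShootingFamily (f : ℝ → ℝ) (U : ℝ → ℝ → ℝ) (r : ℝ → ℝ) : Prop
    extends IsSolutionFamily f (Ioi 0) U where
  contDiff : ContDiff ℝ 1 f
  pos : ∀ x > 0, 0 < f x
  mul_deriv_le : ∀ x > 0, x * deriv f x ≤ f x
  isFirstZero : ∀ t > 0, IsFirstZero (U t) (r t)

namespace IsShootingFamily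

variable {f r W : ℝ → ℝ} {U : ℝ → ℝ → ℝ} {t ρ : ℝ}

theorem apply_pos (h : IsShootingFamily f U r) (ht : 0 < t) : ∀ ρ ∈ Ico 0 (r t), 0 < U t ρ := by
  have hr := h.isFirstZero t ht
  refine pos_of_forall_ne_zero ((h.isEvenC2 ht).continuousOn.mono fun x hx =>
    Icc_zero_subset_Ioo_neg_pi_pi hr.mem.2 (Ico_subset_Icc_self hx)) ?_ hr.ne_zero
  rwa [h.apply_zero t ht]

theorem deriv_neg (h : IsShootingFamily f U r) (ht : 0 < t) :
    ∀ ρ ∈ Ioc 0 (r t), deriv (U t) ρ < 0 :=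
  (h.isEvenSol t ht).deriv_neg_of_pos h.pos (h.isFirstZero t ht).mem.2 (h.apply_pos ht)

theorem strictAntiOn (h : IsShootingFamily f U r) (ht : 0 < t) :
    StrictAntiOn (U t) (Icc 0 (r t)) := by
  have hI := Icc_zero_subset_Ioo_neg_pi_pi (h.isFirstZero t ht).mem.2
  refine strictAntiOn_of_deriv_neg (convex_Icc 0 (r t))
    ((h.isEvenC2 ht).continuousOn.mono hI) fun x hx => ?_
  rw [interior_Icc] at hx
  exact h.deriv_neg ht x (Ioo_subset_Ioc_self hx)

theorem wronskian_variation_neg (h : IsShootingFamily f U r) (ht : 0 < t)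
    (hW : IsVariation U t W) : ∀ ρ ∈ Icc (-r t) (r t), wronskian W (deriv (U t)) ρ < 0 := by
  have hr := h.isFirstZero t ht
  have hsol := h.isEvenSol t ht
  have hW0 : 0 < W 0 := by
    rw [hW.apply_zero h.toIsSolutionFamily ht]
    exact one_pos
  have hLW : ∀ ρ ∈ Ioo 0 (r t), zonalLaplacian W ρ = -(deriv f (U t ρ) * W ρ) := fun ρ hρ =>
    hW.zonalLaplacian_eq h.toIsSolutionFamily h.contDiff ht
      (Icc_zero_subset_Ioo_neg_pi_pi hr.mem.2 (Ioo_subset_Icc_self hρ)) hρ.1.ne'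
  exact hsol.wronskian_deriv_neg (h.contDiff.differentiable one_ne_zero) hr.mem.2
    (h.pos _ (h.apply_pos ht 0 (left_mem_Ico.2 hr.mem.1)))
    (fun ρ hρ => h.deriv_neg ht ρ (Ioo_subset_Ioc_self hρ)) hW.isEvenC2 hW0
    (fun ρ hρ => hsol.variation_pos h.mul_deriv_le hr.mem.2 (h.apply_pos ht) hW.isEvenC2 hW0 hLW ρ
      (Ioo_subset_Ico_self hρ)) hLW

end IsShootingFamily

/-! ### Level curves -/

theorem hasDerivAt_of_eventually_apply_eq {𝕜 : Type*} [NontriviallyNormedField 𝕜]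
    [CompleteSpace 𝕜] {G : 𝕜 × 𝕜 → 𝕜} {G' : 𝕜 × 𝕜 →L[𝕜] 𝕜} {P : 𝕜 → 𝕜} {t : 𝕜}
    (hG : HasStrictFDerivAt G G' (t, P t)) (hG' : G' (0, 1) ≠ 0) (hP : ContinuousAt P t)
    (hconst : ∀ᶠ τ in 𝓝 t, G (τ, P τ) = G (t, P t)) :
    HasDerivAt P (-(G' (1, 0) / G' (0, 1))) t := by
  have hinv : (G' ∘L .inr 𝕜 𝕜 𝕜).IsInvertible :=
    ⟨ContinuousLinearEquiv.unitsEquivAut 𝕜 (Units.mk0 _ hG'), by ext; simp⟩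
  have hcurve : Tendsto (fun τ => (τ, P τ)) (𝓝 t) (𝓝 (t, P t)) := continuousAt_id.prodMk hP
  have heq : P =ᶠ[𝓝 t] hG.implicitFunctionOfProdDomain hinv := by
    filter_upwards [hconst,
      hcurve.eventually (hG.eventually_apply_eq_iff_implicitFunctionOfProdDomain hinv)]
      with τ hτ himplicit
    exact (himplicit.1 hτ).symm
  obtain ⟨m, hm⟩ : ∃ m, HasDerivAt P m t :=
    ⟨_, (hG.hasStrictFDerivAt_implicitFunctionOfProdDomain hinv).hasStrictDerivAt.hasDerivAt
      |>.congr_of_eventuallyEq heq⟩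
  have hzero : G' (1, m) = 0 :=
    ((hG.hasFDerivAt.comp_hasDerivAt t ((hasDerivAt_id t).prodMk hm)).congr_of_eventuallyEq
      (hconst.mono fun τ hτ => hτ.symm)).unique (hasDerivAt_const t (G (t, P t)))
  have hsplit : G' (1, m) = G' (1, 0) + m * G' (0, 1) := by
    rw [← smul_eq_mul, ← map_smul, ← map_add]
    simp
  rw [hzero] at hsplit
  convert hm using 1
  field_simp
  linear_combination hsplit

theorem eventually_nhdsGT_lt_of_hasDerivAt_neg {g : ℝ → ℝ} {g' x : ℝ} (hg : HasDerivAt g g' x)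
    (hg' : g' < 0) :
    ∀ᶠ y in 𝓝[>] x, g y < g x := by
  filter_upwards [nhdsGT_le_nhdsNE x ((hasDerivAt_iff_tendsto_slope.1 hg).eventually_lt_const hg'),
    self_mem_nhdsWithin] with y hy (hxy : x < y)
  rw [slope_def_field] at hy
  exact sub_neg.1 ((div_lt_iff₀ (sub_pos.2 hxy)).1 hy |>.trans_eq (zero_mul _))

/-- `t ↦ (t, P t)` is a level curve of `(t, ρ) ↦ U t ρ` in the region `0 < ρ ≤ r t`, at height `x`
and parametrized by all `t > x`. -/
structure IsLevelCurve (U : ℝ → ℝ → ℝ) (r : ℝ → ℝ) (x : ℝ) (P : ℝ → ℝ) : Prop where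
  mem : ∀ t > x, P t ∈ Ioc 0 (r t)
  apply_eq : ∀ t > x, U t (P t) = x

namespace IsShootingFamily

variable {f r P : ℝ → ℝ} {U W : ℝ → ℝ → ℝ} {t x ρ : ℝ}

theorem mem_Ioo_neg_pi_pi (h : IsShootingFamily f U r) (ht : 0 < t) (hρ : ρ ∈ Icc 0 (r t)) :
    ρ ∈ Ioo (-π) π :=
  Icc_zero_subset_Ioo_neg_pi_pi (h.isFirstZero t ht).mem.2 hρ

theorem continuousAt_uncurry (h : IsShootingFamily f U r) (ht : 0 < t) (hρ : ρ ∈ Ioo (-π) π) :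
    ContinuousAt (fun p : ℝ × ℝ => U p.1 p.2) (t, ρ) :=
  (h.continuousAt_jet h.contDiff ht hρ).fst

theorem isLevelCurve_firstZero (h : IsShootingFamily f U r) : IsLevelCurve U r 0 r where
  mem t ht := right_mem_Ioc.2 (h.isFirstZero t ht).mem.1
  apply_eq t ht := (h.isFirstZero t ht).apply_eq

theorem exists_isLevelCurve (h : IsShootingFamily f U r) (hx : 0 ≤ x) :
    ∃ P, IsLevelCurve U r x P := by
  have hex : ∀ t > x, ∃ ρ ∈ Ioc 0 (r t), U t ρ = x := fun t ht => by
    have ht0 : 0 < t := hx.trans_lt ht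
    have hr := h.isFirstZero t ht0
    have hxU : x ∈ Ico (U t (r t)) (U t 0) := by
      rw [hr.apply_eq, h.apply_zero t ht0]
      exact ⟨hx, ht⟩
    exact intermediate_value_Ioc' hr.mem.1.le
      ((h.isEvenC2 ht0).continuousOn.mono fun _ => h.mem_Ioo_neg_pi_pi ht0) hxU
  choose! P hP using hex
  exact ⟨P, fun t ht => (hP t ht).1, fun t ht => (hP t ht).2⟩

theorem eventually_lt_levelCurve (h : IsShootingFamily f U r) (hx : 0 ≤ x)
    (hP : IsLevelCurve U r x P) (ht : x < t) (hρ : ρ < P t) : ∀ᶠ τ in 𝓝 t, ρ < P τ := by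
  have ht0 : 0 < t := hx.trans_lt ht
  have hPt := hP.mem t ht
  have habove : ∀ᶠ τ in 𝓝 t, ∀ σ ∈ Icc 0 ρ, x < U τ σ := by
    refine isCompact_Icc.eventually_forall_of_forall_eventually fun σ hσ => ?_
    have hσP : σ < P t := hσ.2.trans_lt hρ
    have hσr : σ ∈ Icc 0 (r t) := ⟨hσ.1, hσP.le.trans hPt.2⟩
    refine (h.continuousAt_uncurry ht0 (h.mem_Ioo_neg_pi_pi ht0 hσr)).eventually_const_lt ?_
    exact (hP.apply_eq t ht).symm.trans_lt
      (h.strictAntiOn ht0 hσr (Ioc_subset_Icc_self hPt) hσP)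
  filter_upwards [habove, lt_mem_nhds ht] with τ hτ hxτ
  by_contra! hle
  exact (hτ (P τ) ⟨(hP.mem τ hxτ).1.le, hle⟩).ne' (hP.apply_eq τ hxτ)

theorem eventually_levelCurve_lt (h : IsShootingFamily f U r) (hx : 0 ≤ x)
    (hP : IsLevelCurve U r x P) (ht : x < t) (hρ : P t < ρ) : ∀ᶠ τ in 𝓝 t, P τ < ρ := by
  have ht0 : 0 < t := hx.trans_lt ht
  have hPt := hP.mem t ht
  have hPπ := h.mem_Ioo_neg_pi_pi ht0 (Ioc_subset_Icc_self hPt)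
  obtain ⟨σ, hσU, hPσ, hσ⟩ : ∃ σ, U t σ < x ∧ σ ∈ Ioo (P t) (min ρ π) := by
    have hbelow := eventually_nhdsGT_lt_of_hasDerivAt_neg ((h.isEvenC2 ht0).hasDerivAt hPπ)
      (h.deriv_neg ht0 _ hPt)
    rw [hP.apply_eq t ht] at hbelow
    exact (hbelow.and (Ioo_mem_nhdsGT (lt_min hρ hPπ.2))).exists
  obtain ⟨hσρ, hσπ⟩ := lt_min_iff.1 hσ
  have hcont : ContinuousAt (fun τ => U τ σ) t :=
    (h.continuousAt_uncurry ht0 ⟨hPπ.1.trans hPσ, hσπ⟩).comp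
      (f := fun τ => (τ, σ)) (Continuous.prodMk_left σ).continuousAt
  filter_upwards [hcont.eventually_lt_const hσU, lt_mem_nhds ht] with τ hτ hxτ
  by_contra! hle
  have hPτ := hP.mem τ hxτ
  have hanti := (h.strictAntiOn (hx.trans_lt hxτ)).antitoneOn
    ⟨(hPt.1.trans hPσ).le, (hσρ.le.trans hle).trans hPτ.2⟩ (Ioc_subset_Icc_self hPτ)
    (hσρ.le.trans hle)
  exact (hanti.trans_lt hτ).ne (hP.apply_eq τ hxτ)

theorem continuousAt_levelCurve (h : IsShootingFamily f U r) (hx : 0 ≤ x)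
    (hP : IsLevelCurve U r x P) (ht : x < t) : ContinuousAt P t :=
  tendsto_order.2 ⟨fun _ => h.eventually_lt_levelCurve hx hP ht,
    fun _ => h.eventually_levelCurve_lt hx hP ht⟩

theorem hasDerivAt_levelCurve (h : IsShootingFamily f U r) (hx : 0 ≤ x)
    (hP : IsLevelCurve U r x P) (hW : ∀ t > 0, IsVariation U t (W t)) (ht : x < t) :
    HasDerivAt P (-(W t (P t) / deriv (U t) (P t))) t := by
  have ht0 : 0 < t := hx.trans_lt ht
  have hPt := hP.mem t ht
  have hPπ := h.mem_Ioo_neg_pi_pi ht0 (Ioc_subset_Icc_self hPt)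
  have hF := (hasStrictFDerivAt_phaseMap h.toIsSolutionFamily h.contDiff hW
    (p := (t, P t)) ⟨ht0, hPπ⟩).fst
  refine (hasDerivAt_of_eventually_apply_eq hF ?_ (h.continuousAt_levelCurve hx hP ht)
    ?_).congr_deriv ?_
  · simpa using (h.deriv_neg ht0 _ hPt).ne
  · filter_upwards [lt_mem_nhds ht] with τ hτ
    exact (hP.apply_eq τ hτ).trans (hP.apply_eq t ht).symm
  · simp [phaseMap]

theorem hasDerivAt_deriv_levelCurve (h : IsShootingFamily f U r) (hx : 0 ≤ x)
    (hP : IsLevelCurve U r x P) (hW : ∀ t > 0, IsVariation U t (W t)) (ht : x < t) :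
    HasDerivAt (fun τ => deriv (U τ) (P τ))
      (-(wronskian (W t) (deriv (U t)) (P t) / deriv (U t) (P t))) t := by
  have ht0 : 0 < t := hx.trans_lt ht
  have hPt := hP.mem t ht
  have hF := (hasStrictFDerivAt_phaseMap h.toIsSolutionFamily h.contDiff hW (p := (t, P t))
    ⟨ht0, h.mem_Ioo_neg_pi_pi ht0 (Ioc_subset_Icc_self hPt)⟩).snd.hasFDerivAt
  refine (hF.comp_hasDerivAt t ((hasDerivAt_id t).prodMk
    (h.hasDerivAt_levelCurve hx hP hW ht))).congr_deriv ?_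
  have hne : deriv (U t) (P t) ≠ 0 := (h.deriv_neg ht0 _ hPt).ne
  simp only [phaseMap, wronskian, ContinuousLinearMap.comp_apply, ContinuousLinearMap.coprod_apply,
    ContinuousLinearMap.toSpanSingleton_apply, ContinuousLinearMap.coe_snd', one_smul, neg_smul,
    Prod.smul_mk, smul_eq_mul, Prod.neg_mk, Prod.mk_add_mk]
  field_simp
  ring

theorem strictAntiOn_deriv_levelCurve (h : IsShootingFamily f U r) (hx : 0 ≤ x)
    (hP : IsLevelCurve U r x P) : StrictAntiOn (fun τ => deriv (U τ) (P τ)) (Ioi x) := by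
  have hex : ∀ t > 0, ∃ W, IsVariation U t W := fun t ht => h.exists_isVariation h.contDiff ht
  choose! W hW using hex
  refine strictAntiOn_of_hasDerivWithinAt_neg (convex_Ioi x)
    (fun t ht => (h.hasDerivAt_deriv_levelCurve hx hP hW ht).continuousAt.continuousWithinAt)
    (fun t ht => (h.hasDerivAt_deriv_levelCurve hx hP hW
      (interior_subset ht)).hasDerivWithinAt) fun t ht => ?_
  have hxt : x < t := interior_subset ht
  have ht0 : 0 < t := hx.trans_lt hxt
  have hPt := hP.mem t hxt
  have hr0 : -r t < 0 := neg_neg_of_pos (h.isFirstZero t ht0).mem.1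
  exact neg_neg_of_pos (div_pos_of_neg_of_neg
    (h.wronskian_variation_neg ht0 (hW t ht0) _ ⟨(hr0.trans hPt.1).le, hPt.2⟩)
    (h.deriv_neg ht0 _ hPt))

end IsShootingFamily

/-! ### The closed nodal region -/

/-- The set `Δ̄` of the theorem, on which the solutions are nonnegative when `r t` is the first zero
of `U t`. -/
def closedNodalRegion (r : ℝ → ℝ) : Set (ℝ × ℝ) :=
  {p | 0 < p.1 ∧ -r p.1 ≤ p.2 ∧ p.2 ≤ r p.1}

namespace IsShootingFamily

variable {f r : ℝ → ℝ} {U : ℝ → ℝ → ℝ} {t s ρ σ : ℝ} {p q : ℝ × ℝ}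

theorem closedNodalRegion_subset (h : IsShootingFamily f U r) :
    closedNodalRegion r ⊆ Ioi 0 ×ˢ Ioo (-π) π := fun p hp =>
  ⟨hp.1, Icc_neg_subset_Ioo_neg_pi_pi (h.isFirstZero p.1 hp.1).mem.2 hp.2⟩

theorem apply_abs (h : IsShootingFamily f U r) (ht : 0 < t) (hρ : ρ ∈ Ioo (-π) π) :
    U t |ρ| = U t ρ := by
  rcases abs_choice ρ with habs | habs <;> rw [habs]
  exact (h.isEvenC2 ht).even ρ hρ

theorem apply_nonneg (h : IsShootingFamily f U r) (hp : p ∈ closedNodalRegion r) :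
    0 ≤ U p.1 p.2 := by
  rw [← h.apply_abs hp.1 (h.closedNodalRegion_subset hp).2]
  rcases (abs_le.2 hp.2).eq_or_lt with heq | hlt
  · rw [heq, (h.isFirstZero p.1 hp.1).apply_eq]
  · exact (h.apply_pos hp.1 _ ⟨abs_nonneg _, hlt⟩).le

theorem deriv_lt_deriv_of_apply_eq (h : IsShootingFamily f U r) (ht : 0 < t) (hts : t < s)
    (hρ : ρ ∈ Ioc 0 (r t)) (hσ : σ ∈ Ioc 0 (r s)) (hU : U t ρ = U s σ) :
    deriv (U s) σ < deriv (U t) ρ := by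
  have hρr := Ioc_subset_Icc_self hρ
  have hx : 0 ≤ U t ρ := h.apply_nonneg (p := (t, ρ))
    ⟨ht, (neg_nonpos.2 (hρr.1.trans hρr.2)).trans hρr.1, hρr.2⟩
  have hxt : U t ρ < t := by
    simpa only [h.apply_zero t ht] using
      h.strictAntiOn ht (left_mem_Icc.2 (hρr.1.trans hρr.2)) hρr hρ.1
  obtain ⟨P, hP⟩ := h.exists_isLevelCurve hx
  have hPt : P t = ρ := (h.strictAntiOn ht).injOn
    (Ioc_subset_Icc_self (hP.mem t hxt)) hρr (hP.apply_eq t hxt)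
  have hPs : P s = σ := (h.strictAntiOn (ht.trans hts)).injOn
    (Ioc_subset_Icc_self (hP.mem s (hxt.trans hts))) (Ioc_subset_Icc_self hσ)
    ((hP.apply_eq s (hxt.trans hts)).trans hU)
  simpa only [hPt, hPs] using
    h.strictAntiOn_deriv_levelCurve hx hP (mem_Ioi.2 hxt) (mem_Ioi.2 (hxt.trans hts)) hts

theorem eq_of_phaseMap_eq_of_pos (h : IsShootingFamily f U r) (ht : 0 < t) (hs : 0 < s)
    (hρ : ρ ∈ Ioc 0 (r t)) (hσ : σ ∈ Ioc 0 (r s))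
    (hF : phaseMap U (t, ρ) = phaseMap U (s, σ)) : (t, ρ) = (s, σ) := by
  obtain ⟨hU, hU'⟩ := Prod.ext_iff.1 hF
  rcases lt_trichotomy t s with hlt | rfl | hlt
  · exact ((h.deriv_lt_deriv_of_apply_eq ht hlt hρ hσ hU).ne' hU').elim
  · rw [(h.strictAntiOn ht).injOn (Ioc_subset_Icc_self hρ) (Ioc_subset_Icc_self hσ) hU]
  · exact ((h.deriv_lt_deriv_of_apply_eq hs hlt hσ hρ hU.symm).ne hU').elim

theorem sign_deriv (h : IsShootingFamily f U r) (hp : p ∈ closedNodalRegion r) :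
    SignType.sign (deriv (U p.1) p.2) = -SignType.sign p.2 := by
  have hpI := (h.closedNodalRegion_subset hp).2
  rcases lt_trichotomy p.2 0 with hneg | hzero | hpos
  · have hd := h.deriv_neg hp.1 (-p.2) ⟨neg_pos.2 hneg, neg_le.1 hp.2.1⟩
    rw [(h.isEvenC2 hp.1).deriv_neg hpI, neg_lt_zero] at hd
    rw [sign_neg hneg, sign_pos hd, neg_neg]
  · rw [hzero, (h.isEvenC2 hp.1).deriv_zero, _root_.sign_zero, neg_zero]
  · rw [sign_pos hpos, sign_neg (h.deriv_neg hp.1 _ ⟨hpos, hp.2.2⟩)]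

theorem injOn_phaseMap (h : IsShootingFamily f U r) :
    InjOn (phaseMap U) (closedNodalRegion r) := by
  rintro ⟨t, ρ⟩ hp ⟨s, σ⟩ hq hF
  obtain ⟨hU, hU'⟩ := Prod.ext_iff.1 hF
  have hsign : SignType.sign ρ = SignType.sign σ := by
    rw [← neg_inj, ← h.sign_deriv hp, ← h.sign_deriv hq]
    exact congrArg _ hU'
  rcases lt_trichotomy ρ 0 with hρ | rfl | hρ
  · have hσ : σ < 0 := sign_eq_neg_one_iff.1 (hsign ▸ sign_neg hρ)
    have hpI := (h.closedNodalRegion_subset hp).2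
    have hqI := (h.closedNodalRegion_subset hq).2
    have hreflect := h.eq_of_phaseMap_eq_of_pos hp.1 hq.1
      ⟨neg_pos.2 hρ, neg_le.1 hp.2.1⟩ ⟨neg_pos.2 hσ, neg_le.1 hq.2.1⟩ <| by
        rw [phaseMap, phaseMap, (h.isEvenC2 hp.1).even ρ hpI, (h.isEvenC2 hq.1).even σ hqI,
          (h.isEvenC2 hp.1).deriv_neg hpI, (h.isEvenC2 hq.1).deriv_neg hqI]
        exact Prod.ext hU (congrArg Neg.neg hU')
    simpa only [Prod.mk.injEq, neg_inj] using hreflect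
  · obtain rfl : σ = 0 := sign_eq_zero_iff.1 (hsign ▸ _root_.sign_zero)
    rw [← h.apply_zero t hp.1, ← h.apply_zero s hq.1]
    exact congrArg (·, (0 : ℝ)) hU
  · have hσ : 0 < σ := sign_eq_one_iff.1 (hsign ▸ sign_pos hρ)
    exact h.eq_of_phaseMap_eq_of_pos hp.1 hq.1 ⟨hρ, hp.2.2⟩ ⟨hσ, hq.2.2⟩ hF

theorem continuousAt_firstZero (h : IsShootingFamily f U r) (ht : 0 < t) : ContinuousAt r t :=
  h.continuousAt_levelCurve le_rfl h.isLevelCurve_firstZero ht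

theorem eventually_le_firstZero_of_nonneg (h : IsShootingFamily f U r) (ht : 0 < t)
    (hρ : ρ ∈ Icc 0 (r t)) : ∀ᶠ q in 𝓝 (t, ρ), 0 ≤ U q.1 q.2 → q.2 ≤ r q.1 := by
  have hr : Tendsto (fun q : ℝ × ℝ => r q.1) (𝓝 (t, ρ)) (𝓝 (r t)) :=
    (h.continuousAt_firstZero ht).tendsto.comp continuousAt_fst
  rcases hρ.2.lt_or_eq with hlt | rfl
  · filter_upwards [continuousAt_snd.eventually_lt hr hlt] with q hq _ using hq.le
  have hrt := (h.isFirstZero t ht).mem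
  have hdecreasing : ∀ᶠ q : ℝ × ℝ in 𝓝 (t, r t), deriv (U q.1) q.2 < 0 :=
    ((h.continuousAt_jet h.contDiff ht (h.mem_Ioo_neg_pi_pi ht hρ)).snd.fst).eventually_lt_const
      (h.deriv_neg ht _ (right_mem_Ioc.2 hrt.1))
  obtain ⟨u, hu, v, hv, huv⟩ := mem_nhds_prod_iff.1
    (hdecreasing.and (continuousAt_snd.eventually_mem (Ioo_mem_nhds hrt.1 hrt.2)))
  obtain ⟨a, b, hab, hsub⟩ := mem_nhds_iff_exists_Ioo_subset.1 hv
  filter_upwards [hr.eventually_mem (Ioo_mem_nhds hab.1 hab.2), continuousAt_fst.eventually_mem hu,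
    continuousAt_snd.eventually_mem (Ioo_mem_nhds hab.1 hab.2),
    continuousAt_fst.eventually_mem (Ioi_mem_nhds ht)] with ⟨τ, σ⟩ hrτ hτ hσ hτ0 hU
  dsimp only at hrτ hτ hσ hτ0 hU ⊢
  by_contra! hlt
  have hbox : ∀ x ∈ Icc (r τ) σ, deriv (U τ) x < 0 ∧ x ∈ Ioo 0 π := fun x hx =>
    huv (mk_mem_prod hτ (hsub ⟨hrτ.1.trans_le hx.1, hx.2.trans_lt hσ.2⟩))
  have hanti : StrictAntiOn (U τ) (Icc (r τ) σ) :=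
    strictAntiOn_of_deriv_neg (convex_Icc _ _)
      ((h.isEvenC2 hτ0).continuousOn.mono fun x hx =>
        Ioo_subset_Ioo_left (neg_nonpos.2 pi_pos.le) (hbox x hx).2)
      fun x hx => (hbox x (interior_subset hx)).1
  have hneg := hanti (left_mem_Icc.2 hlt.le) (right_mem_Icc.2 hlt.le) hlt
  rw [(h.isFirstZero τ hτ0).apply_eq] at hneg
  exact hneg.not_ge hU

theorem eventually_mem_closedNodalRegion_of_nonneg (h : IsShootingFamily f U r)
    (hp : p ∈ closedNodalRegion r) :
    ∀ᶠ q in 𝓝 p, 0 ≤ U q.1 q.2 → q ∈ closedNodalRegion r := by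
  have hfold : Tendsto (fun q : ℝ × ℝ => (q.1, |q.2|)) (𝓝 p) (𝓝 (p.1, |p.2|)) :=
    continuousAt_fst.prodMk continuousAt_snd.abs
  filter_upwards [hfold.eventually
      (h.eventually_le_firstZero_of_nonneg hp.1 ⟨abs_nonneg _, abs_le.2 hp.2⟩),
    (isOpen_Ioi.prod isOpen_Ioo).mem_nhds (h.closedNodalRegion_subset hp)] with q hq hqI hU
  rw [h.apply_abs hqI.1 hqI.2] at hq
  exact ⟨hqI.1, abs_le.1 (hq hU)⟩

end IsShootingFamily

/-! ### Extending injectivity to a neighborhood -/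

theorem comap_nhds_inf_principal_le_nhds {X Y : Type*} [TopologicalSpace X] [TopologicalSpace Y]
    {F : X → Y} {A : Set X} {T : Set Y} {a : X} (hT : MapsTo F A T) (hinj : InjOn F A)
    (hA : ∀ᶠ x in 𝓝 a, F x ∈ T → x ∈ A) (hopen : 𝓝 (F a) ≤ map F (𝓝 a)) :
    comap F (𝓝 (F a)) ⊓ 𝓟 A ≤ 𝓝 a := by
  intro V hV
  have himage : F '' (V ∩ {x | F x ∈ T → x ∈ A}) ∈ 𝓝 (F a) :=
    hopen (image_mem_map (inter_mem hV hA))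
  rw [mem_inf_principal]
  filter_upwards [preimage_mem_comap himage]
  rintro b ⟨x, ⟨hxV, hxA⟩, hxb⟩ hbA
  have hxb' : x = b := hinj (hxA (hxb ▸ hT hbA)) hbA hxb
  exact hxb' ▸ hxV

theorem exists_mem_nhdsSet_injOn {X Y : Type*} [PseudoMetricSpace X] [PseudoMetricSpace Y]
    {F : X → Y} {A : Set X} (hF : ∀ a ∈ A, ContinuousAt F a)
    (hloc : ∀ a ∈ A, ∃ u ∈ 𝓝 a, InjOn F u)
    (hind : ∀ a ∈ A, comap F (𝓝 (F a)) ⊓ 𝓟 A ≤ 𝓝 a) : ∃ N ∈ 𝓝ˢ A, InjOn F N := by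
  have hR : ∀ a ∈ A, ∃ R > 0, InjOn F (Metric.ball a (2 * R)) := fun a ha => by
    obtain ⟨u, hu, hinj⟩ := hloc a ha
    obtain ⟨ε, hε, hsub⟩ := Metric.mem_nhds_iff.1 hu
    exact ⟨ε / 2, half_pos hε, hinj.mono (by rwa [mul_div_cancel₀ _ two_ne_zero])⟩
  choose! R hR hinj using hR
  have hδ : ∀ a ∈ A, ∃ δ > 0, ∀ b ∈ A, dist (F b) (F a) < δ → dist b a < R a := fun a ha => by
    have hball := mem_inf_principal.1 (hind a ha (Metric.ball_mem_nhds a (hR a ha)))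
    obtain ⟨δ, hδ, hsub⟩ := (Metric.nhds_basis_ball.comap F).mem_iff.1 hball
    exact ⟨δ, hδ, fun b hb hba => hsub hba hb⟩
  choose! δ hδ hdist using hδ
  let nbhd : X → Set X := fun a => Metric.ball a (R a) ∩ F ⁻¹' Metric.ball (F a) (δ a / 2)
  have hnbhd : ∀ a ∈ A, nbhd a ∈ 𝓝 a := fun a ha =>
    inter_mem (Metric.ball_mem_nhds a (hR a ha))
      ((hF a ha).preimage_mem_nhds (Metric.ball_mem_nhds _ (half_pos (hδ a ha))))
  refine ⟨⋃ a ∈ A, nbhd a, mem_nhdsSet_iff_forall.2 fun a ha =>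
    mem_of_superset (hnbhd a ha) (subset_biUnion_of_mem ha), ?_⟩
  intro x hx y hy hxy
  obtain ⟨a, ha, hxa, hFa⟩ := mem_iUnion₂.1 hx
  obtain ⟨b, hb, hyb, hFb⟩ := mem_iUnion₂.1 hy
  wlog hRab : R a ≤ R b generalizing x y a b
  · exact (this hy hx hxy.symm b hb hyb hFb a ha hxa hFa (not_le.1 hRab).le).symm
  rw [mem_preimage, Metric.mem_ball] at hFa hFb
  have hFab : dist (F a) (F b) < δ a / 2 + δ b / 2 := by
    have htri := dist_triangle_left (F a) (F b) (F x)
    rw [← hxy] at hFb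
    linarith
  have hab : dist a b < R b := by
    rcases le_total (δ a) (δ b) with hle | hle
    · exact hdist b hb a ha (by linarith)
    · rw [dist_comm] at hFab ⊢
      exact (hdist a ha b hb (by linarith)).trans_le hRab
  rw [Metric.mem_ball] at hxa hyb
  refine hinj b hb ?_ ?_ hxy <;> rw [Metric.mem_ball]
  · linarith [dist_triangle x a b]
  · linarith [hR b hb]

namespace IsShootingFamily

variable {f r : ℝ → ℝ} {U : ℝ → ℝ → ℝ} {p : ℝ × ℝ}

theorem eventually_exists_equiv_hasStrictFDerivAt_phaseMap (h : IsShootingFamily f U r)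
    (hp : p ∈ closedNodalRegion r) :
    ∀ᶠ q in 𝓝 p, ∃ L : (ℝ × ℝ) ≃L[ℝ] ℝ × ℝ,
      HasStrictFDerivAt (phaseMap U) (L : ℝ × ℝ →L[ℝ] ℝ × ℝ) q := by
  have hex : ∀ t ∈ Ioi 0, ∃ W, IsVariation U t W := fun t ht => h.exists_isVariation h.contDiff ht
  choose! W hW using hex
  have hpI := h.closedNodalRegion_subset hp
  filter_upwards [(isOpen_Ioi.prod isOpen_Ioo).mem_nhds hpI,
    (continuousAt_wronskian_variation h.toIsSolutionFamily h.contDiff hW hpI).eventually_ne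
      (h.wronskian_variation_neg hp.1 (hW _ hp.1) _ hp.2).ne] with q hqI hq
  exact exists_equiv_hasStrictFDerivAt_phaseMap h.toIsSolutionFamily h.contDiff hW hqI hq

theorem exists_mem_nhdsSet_injOn_phaseMap (h : IsShootingFamily f U r) :
    ∃ N ∈ 𝓝ˢ (closedNodalRegion r), InjOn (phaseMap U) N := by
  refine exists_mem_nhdsSet_injOn (fun p hp => ?_) (fun p hp => ?_) fun p hp => ?_ <;>
  obtain ⟨L, hL⟩ := (h.eventually_exists_equiv_hasStrictFDerivAt_phaseMap hp).self_of_nhds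
  · exact hL.continuousAt
  · have hleft : ∀ᶠ q in 𝓝 p, hL.localInverse (phaseMap U) L p (phaseMap U q) = q :=
      hL.eventually_left_inverse
    exact ⟨_, hleft, LeftInvOn.injOn fun q hq => hq⟩
  · exact comap_nhds_inf_principal_le_nhds (T := {y : ℝ × ℝ | 0 ≤ y.1})
      (fun q hq => h.apply_nonneg hq) h.injOn_phaseMap
      (h.eventually_mem_closedNodalRegion_of_nonneg hp) hL.map_nhds_eq_of_equiv.ge

end IsShootingFamily

/-- Under hypothesis (H), there is an open neighborhood `Δ̃` of
`Δ̄ = {(t,ρ) : t > 0, -r_t ≤ ρ ≤ r_t}` inside `(0,∞) × (-π,π)` on which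
`F(t,ρ) = (U_t(ρ), U_t'(ρ))` is injective with everywhere invertible differential,
i.e. a diffeomorphism onto its image. -/
theorem stmt12 (f : ℝ → ℝ) (hf : ContDiff ℝ 1 f)
    (hH : ∀ x > (0:ℝ), 0 < f x ∧ x * deriv f x ≤ f x)
    (U : ℝ → ℝ → ℝ) (r : ℝ → ℝ)
    (hU : ∀ t > (0:ℝ), IsEvenSol f (U t) ∧ U t 0 = t ∧
      r t ∈ Set.Ioo 0 Real.pi ∧ U t (r t) = 0 ∧ ∀ ρ ∈ Set.Ioo 0 (r t), U t ρ ≠ 0) :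
    ∃ Δt : Set (ℝ × ℝ), IsOpen Δt ∧
      {p : ℝ × ℝ | 0 < p.1 ∧ -r p.1 ≤ p.2 ∧ p.2 ≤ r p.1} ⊆ Δt ∧
      Δt ⊆ Set.Ioi 0 ×ˢ Set.Ioo (-Real.pi) Real.pi ∧
      Set.InjOn (fun p : ℝ × ℝ => (U p.1 p.2, deriv (U p.1) p.2)) Δt ∧
      ∀ p ∈ Δt, ∃ L : (ℝ × ℝ) ≃L[ℝ] (ℝ × ℝ),
        HasFDerivAt (fun p : ℝ × ℝ => (U p.1 p.2, deriv (U p.1) p.2))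
          (L : (ℝ × ℝ) →L[ℝ] (ℝ × ℝ)) p := by
  have h : IsShootingFamily f U r :=
    { isOpen := isOpen_Ioi
      isEvenSol := fun t ht => (hU t ht).1
      apply_zero := fun t ht => (hU t ht).2.1
      contDiff := hf
      pos := fun x hx => (hH x hx).1
      mul_deriv_le := fun x hx => (hH x hx).2
      isFirstZero := fun t ht => ⟨(hU t ht).2.2.1, (hU t ht).2.2.2.1, (hU t ht).2.2.2.2⟩ }
  obtain ⟨N, hN, hinj⟩ := h.exists_mem_nhdsSet_injOn_phaseMap
  have hbox : Ioi 0 ×ˢ Ioo (-π) π ∈ 𝓝ˢ (closedNodalRegion r) :=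
    (isOpen_Ioi.prod isOpen_Ioo).mem_nhdsSet.2 h.closedNodalRegion_subset
  have hdiff := eventually_nhdsSet_iff_forall.2 fun p hp =>
    h.eventually_exists_equiv_hasStrictFDerivAt_phaseMap (p := p) hp
  refine ⟨interior _, isOpen_interior,
    subset_interior_iff_mem_nhdsSet.2 (inter_mem (inter_mem hN hbox) hdiff),
    fun p hp => (interior_subset hp).1.2, hinj.mono fun p hp => (interior_subset hp).1.1,
    fun p hp => ?_⟩
  obtain ⟨L, hL⟩ := (interior_subset hp).2
  exact ⟨L, hL.hasFDerivAt⟩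
end

section
/- Let f: ℝ → ℝ satisfy hypothesis (H). Then the map t ↦ U_t'(r_t) (the constant Neumann value of the rotationally symmetric solution of initial value t) is strictly decreasing on (0,∞). -/
open Real Set

/-!
Let `U` and `V` start at heights `U 0 < V 0` and have first zeros `r` and `s`. In the Wronskian of
`U` and `V`, weighted by `sin`, only the reaction terms survive differentiation, and their sign is
decided by the monotonicity of `f x / x`. Hence `V / U` increases as long as `U ≤ V`, so `U` never
catches up with `V` and `r ≤ s`.

If `r = s`, then `V ≥ (V 0 / U 0) U` up to the common zero, and the slopes there compare. If
`r < s`, slide `V` by `c = s - r`, so that both functions vanish at `r`. The shift adds the term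
`sin c / sin (x + c) * V' (x + c) * U x < 0` to the derivative of the Wronskian. Were the slope of
`V` at `s` not smaller than that of `U` at `r`, the slid `V` would lie below `U` just before `r`;
the Wronskian propagates this order down to `0` and is strictly decreasing wherever it holds. But it
vanishes at both `0` and `r`.
-/

open Filter Topology

section Calculus

variable {g : ℝ → ℝ} {a b : ℝ}

lemma eventually_nhdsLT_lt_of_hasDerivAt_neg {g' : ℝ} (hg : HasDerivAt g g' a) (hg' : g' < 0) :
    ∀ᶠ x in 𝓝[<] a, g a < g x := by
  have hslope : ∀ᶠ x in 𝓝[<] a, slope g a x < 0 :=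
    nhdsLT_le_nhdsNE a ((hasDerivAt_iff_tendsto_slope.1 hg).eventually (gt_mem_nhds hg'))
  filter_upwards [hslope, self_mem_nhdsWithin] with x hx (hxa : x < a)
  rw [slope_def_field, div_neg_iff] at hx
  rcases hx with ⟨hx, -⟩ | ⟨-, hx⟩ <;> linarith

lemma eventually_nhdsLT_lt_of_eventually_deriv_neg (hg : ContinuousAt g a)
    (hneg : ∀ᶠ x in 𝓝[<] a, deriv g x < 0) : ∀ᶠ x in 𝓝[<] a, g a < g x := by
  obtain ⟨l, hl : l < a, hlneg⟩ := mem_nhdsLT_iff_exists_Ioo_subset.1 hneg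
  have hcont : ContinuousOn g (Ioc l a) := fun x hx => by
    rcases hx.2.eq_or_lt with rfl | hxa
    · exact hg.continuousWithinAt
    · exact (differentiableAt_of_deriv_ne_zero
        (ne_of_lt (hlneg ⟨hx.1, hxa⟩))).continuousAt.continuousWithinAt
  have hanti : StrictAntiOn g (Ioc l a) :=
    strictAntiOn_of_deriv_neg (convex_Ioc l a) hcont fun x hx => hlneg (by rwa [interior_Ioc] at hx)
  filter_upwards [Ioo_mem_nhdsLT hl] with x hx
  exact hanti (Ioo_subset_Ioc_self hx) (right_mem_Ioc.2 hl) hx.2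

lemma le_of_hasDerivAt_of_eventually_le_nhdsLT {h : ℝ → ℝ} {g' h' : ℝ} (hg : HasDerivAt g g' a)
    (hh : HasDerivAt h h' a) (ha : g a = h a) (hle : ∀ᶠ x in 𝓝[<] a, g x ≤ h x) : h' ≤ g' := by
  by_contra! hlt
  have hpos : ∀ᶠ x in 𝓝[<] a, g a - h a < g x - h x :=
    eventually_nhdsLT_lt_of_hasDerivAt_neg (hg.sub hh) (sub_neg.2 hlt)
  obtain ⟨x, hx, hgh⟩ := (hpos.and hle).exists
  linarith

lemma exists_first_zero (hab : a ≤ b) (hg : ContinuousOn g (Icc a b)) (ha : 0 < g a)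
    (hb : g b ≤ 0) : ∃ z ∈ Ioc a b, g z = 0 ∧ ∀ x ∈ Ico a z, 0 < g x := by
  have hcompact : IsCompact {x ∈ Icc a b | g x ≤ 0} :=
    isCompact_Icc.of_isClosed_subset (isClosed_Icc.isClosed_le hg continuousOn_const)
      (sep_subset _ _)
  obtain ⟨z, ⟨hz, hgz⟩, hleast⟩ := hcompact.exists_isLeast ⟨b, right_mem_Icc.2 hab, hb⟩
  have hpos : ∀ x ∈ Ico a z, 0 < g x := fun x hx => by
    by_contra! hgx
    exact hx.2.not_ge (hleast ⟨⟨hx.1, hx.2.le.trans hz.2⟩, hgx⟩)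
  obtain ⟨w, hw, hgw⟩ :=
    intermediate_value_Icc' hz.1 (hg.mono (Icc_subset_Icc_right hz.2)) ⟨hgz, ha.le⟩
  have hwz : w = z := by
    by_contra hne
    exact (hpos w ⟨hw.1, lt_of_le_of_ne hw.2 hne⟩).ne' hgw
  have hza : a ≠ z := by
    rintro rfl
    exact hgz.not_gt ha
  exact ⟨z, ⟨lt_of_le_of_ne hz.1 hza, hz.2⟩, hwz ▸ hgw, hpos⟩

lemma exists_last_zero (hab : a ≤ b) (hg : ContinuousOn g (Icc a b)) (ha : g a ≤ 0)
    (hb : 0 < g b) : ∃ z ∈ Ico a b, g z = 0 ∧ ∀ x ∈ Ioc z b, 0 < g x := by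
  have hmaps : MapsTo Neg.neg (Icc (-b) (-a)) (Icc a b) := fun x hx =>
    ⟨by linarith [hx.2], by linarith [hx.1]⟩
  obtain ⟨z, hz, hgz, hpos⟩ := exists_first_zero (g := fun x => g (-x)) (neg_le_neg hab)
    (hg.comp continuous_neg.continuousOn hmaps) (by simpa using hb) (by simpa using ha)
  refine ⟨-z, ⟨by linarith [hz.2], by linarith [hz.1]⟩, hgz, fun x hx => ?_⟩
  simpa using hpos (-x) ⟨by linarith [hx.2], by linarith [hx.1]⟩

lemma antitoneOn_div_id_of_mul_deriv_le (hg : DifferentiableOn ℝ g (Ioi 0))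
    (hle : ∀ x > 0, x * deriv g x ≤ g x) : AntitoneOn (fun x => g x / x) (Ioi 0) := by
  have hderiv : ∀ x ∈ Ioi (0 : ℝ),
      HasDerivAt (fun x => g x / x) ((deriv g x * x - g x * 1) / x ^ 2) x := fun x hx =>
    (hg.differentiableAt (Ioi_mem_nhds hx)).hasDerivAt.div (hasDerivAt_id x) (ne_of_gt hx)
  refine antitoneOn_of_hasDerivWithinAt_nonpos (convex_Ioi 0)
    (fun x hx => (hderiv x hx).continuousAt.continuousWithinAt)
    (fun x hx => (hderiv x (interior_subset hx)).hasDerivWithinAt) fun x hx => ?_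
  exact div_nonpos_of_nonpos_of_nonneg (by linarith [hle x (interior_subset hx)]) (sq_nonneg x)

lemma mul_le_mul_of_antitoneOn_div_id (hg : AntitoneOn (fun x => g x / x) (Ioi 0)) (ha : 0 < a)
    (hab : a ≤ b) : a * g b ≤ b * g a := by
  have hb : 0 < b := ha.trans_le hab
  have hquot : g b / b ≤ g a / a := hg ha hb hab
  rw [div_le_div_iff₀ hb ha] at hquot
  linarith

end Calculus

section Wronskian

variable {u v : ℝ → ℝ} {a b x : ℝ}

/-- The Wronskian `v' u - v u'` with the weight `sin` that puts the radial Laplacian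
`U'' + (cot ρ) U'` of the sphere in divergence form. Its sign decides the monotonicity of `v / u`,
and it vanishes at `0` without any initial condition on `u` and `v`. -/
noncomputable def sinWronskian (u v : ℝ → ℝ) (x : ℝ) : ℝ :=
  sin x * (deriv v x * u x - v x * deriv u x)

lemma sinWronskian_zero : sinWronskian u v 0 = 0 := by
  simp [sinWronskian]

lemma continuousAt_sinWronskian (hu : ContinuousAt u x) (hv : ContinuousAt v x)
    (hu' : ContinuousAt (deriv u) x) (hv' : ContinuousAt (deriv v) x) :
    ContinuousAt (sinWronskian u v) x :=
  continuous_sin.continuousAt.mul ((hv'.mul hu).sub (hv.mul hu'))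

lemma hasDerivAt_sinWronskian {A B : ℝ} (hu : DifferentiableAt ℝ u x)
    (hv : DifferentiableAt ℝ v x) (hA : HasDerivAt (fun y => sin y * deriv u y) A x)
    (hB : HasDerivAt (fun y => sin y * deriv v y) B x) :
    HasDerivAt (sinWronskian u v) (B * u x - v x * A) x := by
  have hflux : sinWronskian u v =
      fun y => sin y * deriv v y * u y - v y * (sin y * deriv u y) := by
    ext y
    rw [sinWronskian]
    ring
  rw [hflux]
  exact ((hB.mul hu.hasDerivAt).sub (hv.hasDerivAt.mul hA)).congr_deriv (by ring)

lemma monotoneOn_div_of_sinWronskian_nonneg (ha : 0 ≤ a) (hb : b ≤ π)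
    (hu : ∀ x ∈ Icc a b, DifferentiableAt ℝ u x) (hv : ∀ x ∈ Icc a b, DifferentiableAt ℝ v x)
    (hpos : ∀ x ∈ Icc a b, 0 < u x) (hW : ∀ x ∈ Ioo a b, 0 ≤ sinWronskian u v x) :
    MonotoneOn (fun x => v x / u x) (Icc a b) := by
  have hderiv : ∀ x ∈ Icc a b, HasDerivAt (fun x => v x / u x)
      ((deriv v x * u x - v x * deriv u x) / u x ^ 2) x := fun x hx =>
    (hv x hx).hasDerivAt.div (hu x hx).hasDerivAt (hpos x hx).ne'
  refine monotoneOn_of_hasDerivWithinAt_nonneg (convex_Icc a b)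
    (fun x hx => (hderiv x hx).continuousAt.continuousWithinAt)
    (fun x hx => (hderiv x (interior_subset hx)).hasDerivWithinAt) fun x hx => ?_
  rw [interior_Icc] at hx
  have hsin : 0 < sin x := sin_pos_of_pos_of_lt_pi (ha.trans_lt hx.1) (hx.2.trans_le hb)
  exact div_nonneg (nonneg_of_mul_nonneg_right (hW x hx) hsin) (sq_nonneg _)

end Wronskian

/-- `r` is the smallest positive zero of `U` and lies before the antipodal point `π`. -/
def IsFirstZero_s13 (U : ℝ → ℝ) (r : ℝ) : Prop :=
  r ∈ Ioo 0 π ∧ U r = 0 ∧ ∀ ρ ∈ Ioo 0 r, U ρ ≠ 0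

lemma IsFirstZero_s13.pos {U : ℝ → ℝ} {r x : ℝ} (hr : IsFirstZero_s13 U r)
    (hU : ContinuousOn U (Ico 0 r)) (h0 : 0 < U 0) (hx : x ∈ Ico 0 r) : 0 < U x := by
  by_contra! hUx
  obtain ⟨z, hz, hUz, -⟩ :=
    exists_first_zero hx.1 (hU.mono (Icc_subset_Ico_right hx.2)) h0 hUx
  exact hr.2.2 z ⟨hz.1, hz.2.trans_lt hx.2⟩ hUz

namespace IsEvenSol

variable {f U V : ℝ → ℝ} {c r x : ℝ}

lemma differentiableAt (hU : IsEvenSol f U) (hx : 0 ≤ x) (hxπ : x < π) :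
    DifferentiableAt ℝ U x :=
  (hU.2.1.contDiffAt (Ioo_mem_nhds (by linarith [pi_pos]) hxπ)).differentiableAt (by norm_num)

lemma differentiableAt_shift (hU : IsEvenSol f U) (hx : 0 ≤ x + c) (hxπ : x + c < π) :
    DifferentiableAt ℝ (fun y => U (y + c)) x :=
  differentiableAt_comp_add_const.2 (hU.differentiableAt hx hxπ)

lemma differentiableAt_deriv (hU : IsEvenSol f U) (hx : 0 ≤ x) (hxπ : x < π) :
    DifferentiableAt ℝ (deriv U) x := by
  have hU' : ContDiffOn ℝ 1 (deriv U) (Ioo (-π) π) :=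
    hU.2.1.deriv_of_isOpen isOpen_Ioo (by norm_num)
  exact (hU'.contDiffAt (Ioo_mem_nhds (by linarith [pi_pos]) hxπ)).differentiableAt (by norm_num)

lemma continuousOn_sin_mul_deriv (hU : IsEvenSol f U) (hr : r < π) :
    ContinuousOn (fun x => sin x * deriv U x) (Icc 0 r) := fun _ hx =>
  (continuous_sin.continuousAt.mul
    (hU.differentiableAt_deriv hx.1 (hx.2.trans_lt hr)).continuousAt).continuousWithinAt

-- The first-order term is what `sin` fails to absorb after the shift:
-- `cos x * sin (x + c) - sin x * cos (x + c) = sin c`.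
lemma hasDerivAt_sin_mul_deriv_shift (hU : IsEvenSol f U) (hx : x + c ∈ Ioo 0 π) :
    HasDerivAt (fun y => sin y * deriv (fun z => U (z + c)) y)
      (sin c / sin (x + c) * deriv U (x + c) - sin x * f (U (x + c))) x := by
  have hU'' := (hU.differentiableAt_deriv hx.1.le hx.2).hasDerivAt.comp_add_const x c
  have hsin : sin (x + c) ≠ 0 := (sin_pos_of_mem_Ioo hx).ne'
  have hode := hU.2.2 (x + c) ⟨by linarith [hx.1, pi_pos], hx.2⟩ hx.1.ne'
  have hshift : sin c = sin (x + c) * cos x - cos (x + c) * sin x := by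
    rw [← sin_sub, add_sub_cancel_left]
  simp only [deriv_comp_add_const]
  refine ((hasDerivAt_sin x).mul hU'').congr_deriv ?_
  rw [hshift]
  field_simp at hode ⊢
  linear_combination sin x * hode

lemma hasDerivAt_sin_mul_deriv (hU : IsEvenSol f U) (hx : x ∈ Ioo 0 π) :
    HasDerivAt (fun y => sin y * deriv U y) (-(sin x * f (U x))) x := by
  simpa using hU.hasDerivAt_sin_mul_deriv_shift (c := 0) (by simpa using hx)

lemma deriv_neg (hU : IsEvenSol f U) (hr : r < π) (hf : ∀ x ∈ Ioo 0 r, 0 < f (U x))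
    (hx : x ∈ Ioc 0 r) : deriv U x < 0 := by
  have hanti : StrictAntiOn (fun x => sin x * deriv U x) (Icc 0 r) := by
    refine strictAntiOn_of_deriv_neg (convex_Icc 0 r) (hU.continuousOn_sin_mul_deriv hr)
      fun y hy => ?_
    rw [interior_Icc] at hy
    have hyπ : y ∈ Ioo 0 π := ⟨hy.1, hy.2.trans hr⟩
    rw [(hU.hasDerivAt_sin_mul_deriv hyπ).deriv, neg_lt_zero]
    exact mul_pos (sin_pos_of_mem_Ioo hyπ) (hf y hy)
  have hflux : sin x * deriv U x < sin 0 * deriv U 0 :=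
    hanti ⟨le_rfl, hx.1.le.trans hx.2⟩ ⟨hx.1.le, hx.2⟩ hx.1
  rw [sin_zero, zero_mul] at hflux
  exact (pos_iff_neg_of_mul_neg hflux).1 (sin_pos_of_pos_of_lt_pi hx.1 (hx.2.trans_lt hr))

lemma hasDerivAt_sinWronskian_shift (hU : IsEvenSol f U) (hV : IsEvenSol f V)
    (hx : x ∈ Ioo 0 π) (hxc : x + c ∈ Ioo 0 π) :
    HasDerivAt (sinWronskian U fun y => V (y + c))
      (sin x * (V (x + c) * f (U x) - U x * f (V (x + c))) +
        sin c / sin (x + c) * deriv V (x + c) * U x) x := by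
  refine (hasDerivAt_sinWronskian (hU.differentiableAt hx.1.le hx.2)
    (hV.differentiableAt_shift hxc.1.le hxc.2)
    (hU.hasDerivAt_sin_mul_deriv hx) (hV.hasDerivAt_sin_mul_deriv_shift hxc)).congr_deriv ?_
  ring

lemma continuousOn_sinWronskian_shift (hU : IsEvenSol f U) (hV : IsEvenSol f V) (hc : 0 ≤ c)
    (hr : r + c < π) : ContinuousOn (sinWronskian U fun y => V (y + c)) (Icc 0 r) := by
  intro x hx
  have hxπ : x < π := by linarith [hx.2]
  have hxc : 0 ≤ x + c := add_nonneg hx.1 hc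
  have hxcπ : x + c < π := by linarith [hx.2]
  have hV' : ContinuousAt (deriv fun y => V (y + c)) x := by
    rw [funext fun y => deriv_comp_add_const (f := V) (x := y) (a := c)]
    exact (differentiableAt_comp_add_const.2 (hV.differentiableAt_deriv hxc hxcπ)).continuousAt
  exact (continuousAt_sinWronskian (hU.differentiableAt hx.1 hxπ).continuousAt
    (hV.differentiableAt_shift hxc hxcπ).continuousAt
    (hU.differentiableAt_deriv hx.1 hxπ).continuousAt hV').continuousWithinAt

lemma pos_of_isFirstZero (hU : IsEvenSol f U) (h0 : 0 < U 0) (hr : IsFirstZero_s13 U r)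
    (hx : x ∈ Ico 0 r) : 0 < U x :=
  hr.pos (fun _ hy =>
    (hU.differentiableAt hy.1 (hy.2.trans hr.1.2)).continuousAt.continuousWithinAt) h0 hx

lemma deriv_neg_of_isFirstZero (hf : ∀ x > 0, 0 < f x) (hU : IsEvenSol f U) (h0 : 0 < U 0)
    (hr : IsFirstZero_s13 U r) (hx : x ∈ Ioc 0 r) : deriv U x < 0 :=
  hU.deriv_neg hr.1.2 (fun _ hy => hf _ (hU.pos_of_isFirstZero h0 hr (Ioo_subset_Ico_self hy))) hx

end IsEvenSol

section Comparison

variable {f U V : ℝ → ℝ} {a c m r s x : ℝ}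

lemma monotoneOn_div_of_le (hf : AntitoneOn (fun x => f x / x) (Ioi 0)) (hU : IsEvenSol f U)
    (hV : IsEvenSol f V) (hm : m < π) (hpos : ∀ x ∈ Icc 0 m, 0 < U x)
    (hle : ∀ x ∈ Ioo 0 m, U x ≤ V x) : MonotoneOn (fun x => V x / U x) (Icc 0 m) := by
  have hcont : ContinuousOn (sinWronskian U V) (Icc 0 m) := by
    simpa only [add_zero] using
      hU.continuousOn_sinWronskian_shift hV le_rfl (by rwa [add_zero])
  have hderiv : ∀ x ∈ Ioo 0 m, HasDerivAt (sinWronskian U V)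
      (sin x * (V x * f (U x) - U x * f (V x))) x := fun x hx => by
    have hxπ : x ∈ Ioo 0 π := ⟨hx.1, hx.2.trans hm⟩
    simpa using hU.hasDerivAt_sinWronskian_shift (c := 0) hV hxπ (by rwa [add_zero])
  have hmono : MonotoneOn (sinWronskian U V) (Icc 0 m) := by
    refine monotoneOn_of_hasDerivWithinAt_nonneg (convex_Icc 0 m) hcont
      (f' := fun x => sin x * (V x * f (U x) - U x * f (V x))) ?_ ?_ <;> rw [interior_Icc]
    · exact fun x hx => (hderiv x hx).hasDerivWithinAt
    · exact fun x hx => mul_nonneg (sin_pos_of_pos_of_lt_pi hx.1 (hx.2.trans hm)).le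
        (sub_nonneg.2 (mul_le_mul_of_antitoneOn_div_id hf (hpos x (Ioo_subset_Icc_self hx))
          (hle x hx)))
  refine monotoneOn_div_of_sinWronskian_nonneg le_rfl hm.le
    (fun x hx => hU.differentiableAt hx.1 (hx.2.trans_lt hm))
    (fun x hx => hV.differentiableAt hx.1 (hx.2.trans_lt hm)) hpos fun x hx => ?_
  rw [← sinWronskian_zero (u := U) (v := V)]
  exact hmono ⟨le_rfl, hx.1.le.trans hx.2.le⟩ (Ioo_subset_Icc_self hx) hx.1.le

lemma lt_of_lt_at_zero (hf : AntitoneOn (fun x => f x / x) (Ioi 0)) (hU : IsEvenSol f U)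
    (hV : IsEvenSol f V) (hm : m < π) (hpos : ∀ x ∈ Icc 0 m, 0 < U x) (h0 : U 0 < V 0)
    (hx : x ∈ Icc 0 m) : U x < V x := by
  by_contra! hVU
  have hcont : ContinuousOn (fun y => V y - U y) (Icc 0 x) := fun y hy =>
    have hyπ : y < π := hy.2.trans_lt (hx.2.trans_lt hm)
    ((hV.differentiableAt hy.1 hyπ).sub
      (hU.differentiableAt hy.1 hyπ)).continuousAt.continuousWithinAt
  obtain ⟨z, hz, hVz, hlt⟩ := exists_first_zero hx.1 hcont (sub_pos.2 h0) (sub_nonpos.2 hVU)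
  have hzm : z ≤ m := hz.2.trans hx.2
  have hpos' : ∀ y ∈ Icc 0 z, 0 < U y := fun y hy => hpos y ⟨hy.1, hy.2.trans hzm⟩
  have hmono := monotoneOn_div_of_le hf hU hV (hzm.trans_lt hm) hpos'
    fun y hy => (sub_pos.1 (hlt y (Ioo_subset_Ico_self hy))).le
  have hquot : V 0 / U 0 ≤ V z / U z :=
    hmono (left_mem_Icc.2 hz.1.le) (right_mem_Icc.2 hz.1.le) hz.1.le
  rw [sub_eq_zero.1 hVz, div_self (hpos' z (right_mem_Icc.2 hz.1.le)).ne',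
    div_le_one (hpos' 0 (left_mem_Icc.2 hz.1.le))] at hquot
  linarith

lemma mul_le_of_lt_at_zero (hf : AntitoneOn (fun x => f x / x) (Ioi 0)) (hU : IsEvenSol f U)
    (hV : IsEvenSol f V) (hm : m < π) (hpos : ∀ x ∈ Icc 0 m, 0 < U x) (h0 : U 0 < V 0)
    (hx : x ∈ Icc 0 m) : V 0 / U 0 * U x ≤ V x := by
  have hlt : ∀ y ∈ Ioo 0 m, U y ≤ V y := fun y hy =>
    (lt_of_lt_at_zero hf hU hV hm hpos h0 (Ioo_subset_Icc_self hy)).le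
  have hquot : V 0 / U 0 ≤ V x / U x :=
    monotoneOn_div_of_le hf hU hV hm hpos hlt ⟨le_rfl, hx.1.trans hx.2⟩ hx hx.1
  rwa [le_div_iff₀ (hpos x hx)] at hquot

lemma IsFirstZero_s13.le_of_lt_at_zero (hf : AntitoneOn (fun x => f x / x) (Ioi 0))
    (hU : IsEvenSol f U) (hV : IsEvenSol f V) (hU0 : 0 < U 0) (h0 : U 0 < V 0)
    (hr : IsFirstZero_s13 U r) (hs : IsFirstZero_s13 V s) : r ≤ s := by
  by_contra! hsr
  have hpos : ∀ x ∈ Icc 0 s, 0 < U x := fun x hx =>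
    hU.pos_of_isFirstZero hU0 hr ⟨hx.1, hx.2.trans_lt hsr⟩
  have hs_mem : s ∈ Icc 0 s := right_mem_Icc.2 hs.1.1.le
  have hUV : U s < V s := lt_of_lt_at_zero hf hU hV hs.1.2 hpos h0 hs_mem
  linarith [hpos s hs_mem, hs.2.1]

lemma deriv_lt_deriv_of_common_firstZero (hfpos : ∀ x > 0, 0 < f x)
    (hf : AntitoneOn (fun x => f x / x) (Ioi 0)) (hU : IsEvenSol f U) (hV : IsEvenSol f V)
    (hU0 : 0 < U 0) (h0 : U 0 < V 0) (hr : IsFirstZero_s13 U r) (hVr : V r = 0) :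
    deriv V r < deriv U r := by
  have hU' := (hU.differentiableAt hr.1.1.le hr.1.2).hasDerivAt
  have hV' := (hV.differentiableAt hr.1.1.le hr.1.2).hasDerivAt
  have hle : ∀ᶠ x in 𝓝[<] r, V 0 / U 0 * U x ≤ V x := by
    filter_upwards [Ioo_mem_nhdsLT hr.1.1] with x hx
    exact mul_le_of_lt_at_zero hf hU hV (hx.2.trans hr.1.2) (fun y hy =>
      hU.pos_of_isFirstZero hU0 hr ⟨hy.1, hy.2.trans_lt hx.2⟩) h0 (right_mem_Icc.2 hx.1.le)
  calc deriv V r ≤ V 0 / U 0 * deriv U r :=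
        le_of_hasDerivAt_of_eventually_le_nhdsLT (hU'.const_mul _) hV'
          (by rw [hr.2.1, hVr, mul_zero]) hle
    _ < deriv U r := mul_lt_of_one_lt_left
        (hU.deriv_neg_of_isFirstZero hfpos hU0 hr (right_mem_Ioc.2 hr.1.1))
        ((one_lt_div hU0).2 h0)

lemma strictAntiOn_sinWronskian_shift (hf : AntitoneOn (fun x => f x / x) (Ioi 0))
    (hU : IsEvenSol f U) (hV : IsEvenSol f V) (ha : 0 ≤ a) (hc : 0 < c) (hrc : r + c < π)
    (hVpos : ∀ x ∈ Ioo a r, 0 < V (x + c)) (hV' : ∀ x ∈ Ioo a r, deriv V (x + c) < 0)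
    (hle : ∀ x ∈ Ioo a r, V (x + c) ≤ U x) :
    StrictAntiOn (sinWronskian U fun y => V (y + c)) (Icc a r) := by
  refine strictAntiOn_of_deriv_neg (convex_Icc a r)
    ((hU.continuousOn_sinWronskian_shift hV hc.le hrc).mono (Icc_subset_Icc_left ha)) fun x hx => ?_
  rw [interior_Icc] at hx
  have hx_mem : x ∈ Ioo 0 π := ⟨ha.trans_lt hx.1, by linarith [hx.2]⟩
  have hxc_mem : x + c ∈ Ioo 0 π := ⟨add_pos hx_mem.1 hc, by linarith [hx.2]⟩
  have hsin_c : 0 < sin c := sin_pos_of_pos_of_lt_pi hc (by linarith [hx_mem.1, hxc_mem.2])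
  have hreaction : sin x * (V (x + c) * f (U x) - U x * f (V (x + c))) ≤ 0 :=
    mul_nonpos_of_nonneg_of_nonpos (sin_pos_of_mem_Ioo hx_mem).le
      (sub_nonpos.2 (mul_le_mul_of_antitoneOn_div_id hf (hVpos x hx) (hle x hx)))
  have hdrift : sin c / sin (x + c) * deriv V (x + c) * U x < 0 :=
    mul_neg_of_neg_of_pos
      (mul_neg_of_pos_of_neg (div_pos hsin_c (sin_pos_of_mem_Ioo hxc_mem)) (hV' x hx))
      ((hVpos x hx).trans_le (hle x hx))
  rw [(hU.hasDerivAt_sinWronskian_shift hV hx_mem hxc_mem).deriv]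
  exact add_neg_of_nonpos_of_neg hreaction hdrift

-- The difference of the slopes may vanish at `r`; its product with `sin` still has negative
-- derivative there, because the reaction terms cancel and only the shift defect `sin c` remains.
lemma eventually_shift_lt_of_deriv_le (hU : IsEvenSol f U) (hV : IsEvenSol f V) (hc : 0 < c)
    (hr : 0 < r) (hrc : r + c < π) (hUV : U r = V (r + c)) (hV' : deriv V (r + c) < 0)
    (hle : deriv U r ≤ deriv V (r + c)) : ∀ᶠ x in 𝓝[<] r, V (x + c) < U x := by
  have hr_mem : r ∈ Ioo 0 π := ⟨hr, by linarith⟩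
  have hrc_mem : r + c ∈ Ioo 0 π := ⟨add_pos hr hc, hrc⟩
  have hsin_c : 0 < sin c := sin_pos_of_pos_of_lt_pi hc (by linarith)
  have hflux : ∀ᶠ x in 𝓝[<] r, sin r * deriv V (r + c) - sin r * deriv U r <
      sin x * deriv V (x + c) - sin x * deriv U x := by
    have hderiv := (hV.hasDerivAt_sin_mul_deriv_shift hrc_mem).sub
      (hU.hasDerivAt_sin_mul_deriv hr_mem)
    simp only [deriv_comp_add_const, hUV, sub_neg_eq_add, sub_add_cancel] at hderiv
    exact eventually_nhdsLT_lt_of_hasDerivAt_neg hderiv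
      (mul_neg_of_pos_of_neg (div_pos hsin_c (sin_pos_of_mem_Ioo hrc_mem)) hV')
  have hdiff : ∀ x ∈ Ioc 0 r, HasDerivAt (fun y => U y - V (y + c))
      (deriv U x - deriv V (x + c)) x := fun x hx =>
    (hU.differentiableAt hx.1.le (hx.2.trans_lt hr_mem.2)).hasDerivAt.sub
      ((hV.differentiableAt (add_pos hx.1 hc).le (by linarith [hx.2])).hasDerivAt.comp_add_const
        x c)
  have hslope : ∀ᶠ x in 𝓝[<] r, deriv (fun y => U y - V (y + c)) x < 0 := by
    filter_upwards [hflux, Ioo_mem_nhdsLT hr] with x hlt hx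
    have hsin_x : 0 < sin x := sin_pos_of_pos_of_lt_pi hx.1 (hx.2.trans hr_mem.2)
    have hle_flux : sin r * deriv U r ≤ sin r * deriv V (r + c) :=
      mul_le_mul_of_nonneg_left hle (sin_pos_of_mem_Ioo hr_mem).le
    rw [(hdiff x (Ioo_subset_Ioc_self hx)).deriv, sub_neg]
    exact lt_of_mul_lt_mul_left (by linarith) hsin_x.le
  filter_upwards [eventually_nhdsLT_lt_of_eventually_deriv_neg
    (hdiff r (right_mem_Ioc.2 hr)).continuousAt hslope] with x hx
  linarith

lemma sinWronskian_shift_eq_zero (hU : U r = 0) (hV : V (r + c) = 0) :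
    sinWronskian U (fun y => V (y + c)) r = 0 := by
  simp [sinWronskian, hU, hV]

lemma shift_ne_of_forall_shift_lt (hfpos : ∀ x > 0, 0 < f x)
    (hf : AntitoneOn (fun x => f x / x) (Ioi 0)) (hU : IsEvenSol f U) (hV : IsEvenSol f V)
    (hV0 : 0 < V 0) (hc : 0 < c) (hUr : U r = 0) (hs : IsFirstZero_s13 V (r + c)) (hx : x ∈ Ico 0 r)
    (hlt : ∀ y ∈ Ioo x r, V (y + c) < U y) : V (x + c) ≠ U x := by
  intro heq
  have hrc : r + c < π := hs.1.2
  obtain ⟨w, hxw, hwr⟩ := exists_between hx.2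
  have hVpos : ∀ y ∈ Ico x r, 0 < V (y + c) := fun y hy =>
    hV.pos_of_isFirstZero hV0 hs ⟨by linarith [hx.1, hy.1], by linarith [hy.2]⟩
  have hUpos : ∀ y ∈ Icc x w, 0 < U y := fun y hy => by
    rcases hy.1.eq_or_lt with rfl | hxy
    · exact heq ▸ hVpos x ⟨le_rfl, hx.2⟩
    · exact (hVpos y ⟨hy.1, hy.2.trans_lt hwr⟩).trans (hlt y ⟨hxy, hy.2.trans_lt hwr⟩)
  have hWanti := strictAntiOn_sinWronskian_shift hf hU hV hx.1 hc hrc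
    (fun y hy => hVpos y (Ioo_subset_Ico_self hy))
    (fun y hy => hV.deriv_neg_of_isFirstZero hfpos hV0 hs
      ⟨by linarith [hx.1, hy.1], by linarith [hy.2]⟩)
    (fun y hy => (hlt y hy).le)
  have hWpos : ∀ y ∈ Ioo x w, 0 ≤ sinWronskian U (fun y => V (y + c)) y := fun y hy => by
    rw [← sinWronskian_shift_eq_zero hUr hs.2.1]
    exact hWanti.antitoneOn ⟨hy.1.le, (hy.2.trans hwr).le⟩ (right_mem_Icc.2 hx.2.le)
      (hy.2.trans hwr).le
  have hmono := monotoneOn_div_of_sinWronskian_nonneg hx.1 (by linarith)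
    (fun y hy => hU.differentiableAt (hx.1.trans hy.1) (by linarith [hy.2]))
    (fun y hy => hV.differentiableAt_shift (by linarith [hx.1, hy.1]) (by linarith [hy.2]))
    hUpos hWpos
  have hquot : V (x + c) / U x ≤ V (w + c) / U w :=
    hmono (left_mem_Icc.2 hxw.le) (right_mem_Icc.2 hxw.le) hxw.le
  rw [heq, div_self (hUpos x (left_mem_Icc.2 hxw.le)).ne',
    one_le_div (hUpos w (right_mem_Icc.2 hxw.le))] at hquot
  exact hquot.not_gt (hlt w ⟨hxw, hwr⟩)

lemma shift_lt_of_eventually_shift_lt (hfpos : ∀ x > 0, 0 < f x)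
    (hf : AntitoneOn (fun x => f x / x) (Ioi 0)) (hU : IsEvenSol f U) (hV : IsEvenSol f V)
    (hV0 : 0 < V 0) (hc : 0 < c) (hUr : U r = 0) (hs : IsFirstZero_s13 V (r + c))
    (hnear : ∀ᶠ x in 𝓝[<] r, V (x + c) < U x) (hx : x ∈ Ico 0 r) : V (x + c) < U x := by
  by_contra! hUV
  have hrc : r + c < π := hs.1.2
  obtain ⟨l, ⟨hxl, hlr⟩, hl⟩ := (mem_nhdsLT_iff_exists_mem_Ico_Ioo_subset hx.2).1 hnear
  obtain ⟨w, hlw, hwr⟩ := exists_between hlr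
  have hcont : ContinuousOn (fun y => U y - V (y + c)) (Icc x w) := fun y hy =>
    ((hU.differentiableAt (hx.1.trans hy.1) (by linarith [hy.2])).sub
      (hV.differentiableAt_shift (by linarith [hx.1, hy.1])
        (by linarith [hy.2]))).continuousAt.continuousWithinAt
  obtain ⟨z, hz, hUz, hzw⟩ := exists_last_zero (hxl.trans hlw.le) hcont (sub_nonpos.2 hUV)
    (sub_pos.2 (hl ⟨hlw, hwr⟩))
  have hlt : ∀ y ∈ Ioo z r, V (y + c) < U y := fun y hy => by
    rcases le_or_gt y w with hyw | hwy
    · exact sub_pos.1 (hzw y ⟨hy.1, hyw⟩)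
    · exact hl ⟨hlw.trans hwy, hy.2⟩
  exact shift_ne_of_forall_shift_lt hfpos hf hU hV hV0 hc hUr hs
    ⟨hx.1.trans hz.1, hz.2.trans hwr⟩ hlt (sub_eq_zero.1 hUz).symm

lemma deriv_lt_deriv_of_shifted_firstZero (hfpos : ∀ x > 0, 0 < f x)
    (hf : AntitoneOn (fun x => f x / x) (Ioi 0)) (hU : IsEvenSol f U) (hV : IsEvenSol f V)
    (hV0 : 0 < V 0) (hc : 0 < c) (hr : 0 < r) (hUr : U r = 0) (hs : IsFirstZero_s13 V (r + c)) :
    deriv V (r + c) < deriv U r := by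
  by_contra! hle
  have hV' : ∀ x ∈ Ioc 0 r, deriv V (x + c) < 0 := fun x hx =>
    hV.deriv_neg_of_isFirstZero hfpos hV0 hs ⟨add_pos hx.1 hc, by linarith [hx.2]⟩
  have hnear := eventually_shift_lt_of_deriv_le hU hV hc hr hs.1.2 (hUr.trans hs.2.1.symm)
    (hV' r (right_mem_Ioc.2 hr)) hle
  have hWanti := strictAntiOn_sinWronskian_shift hf hU hV le_rfl hc hs.1.2
    (fun x hx => hV.pos_of_isFirstZero hV0 hs ⟨by linarith [hx.1], by linarith [hx.2]⟩)
    (fun x hx => hV' x (Ioo_subset_Ioc_self hx))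
    (fun x hx => (shift_lt_of_eventually_shift_lt hfpos hf hU hV hV0 hc hUr hs hnear
      (Ioo_subset_Ico_self hx)).le)
  have hW := hWanti (left_mem_Icc.2 hr.le) (right_mem_Icc.2 hr.le) hr
  rw [sinWronskian_zero, sinWronskian_shift_eq_zero hUr hs.2.1] at hW
  exact hW.false

lemma deriv_firstZero_lt_of_lt_at_zero (hfpos : ∀ x > 0, 0 < f x)
    (hf : AntitoneOn (fun x => f x / x) (Ioi 0)) (hU : IsEvenSol f U) (hV : IsEvenSol f V)
    (hU0 : 0 < U 0) (h0 : U 0 < V 0) (hr : IsFirstZero_s13 U r) (hs : IsFirstZero_s13 V s) :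
    deriv V s < deriv U r := by
  obtain ⟨c, rfl⟩ : ∃ c, s = r + c := ⟨s - r, by ring⟩
  have hc : 0 ≤ c := by linarith [hr.le_of_lt_at_zero hf hU hV hU0 h0 hs]
  rcases hc.eq_or_lt with rfl | hc
  · simp only [add_zero] at hs ⊢
    exact deriv_lt_deriv_of_common_firstZero hfpos hf hU hV hU0 h0 hr hs.2.1
  · exact deriv_lt_deriv_of_shifted_firstZero hfpos hf hU hV (hU0.trans h0) hc hr.1.1 hr.2.1 hs

end Comparison

theorem stmt13_general (f : ℝ → ℝ) (hfpos : ∀ x > (0 : ℝ), 0 < f x)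
    (hf : AntitoneOn (fun x => f x / x) (Ioi 0)) (U : ℝ → ℝ → ℝ) (r : ℝ → ℝ)
    (hU : ∀ t > (0 : ℝ), IsEvenSol f (U t) ∧ U t 0 = t ∧ IsFirstZero_s13 (U t) (r t)) :
    StrictAntiOn (fun t => deriv (U t) (r t)) (Ioi 0) := by
  intro t (ht : 0 < t) u (hu : 0 < u) htu
  obtain ⟨hUt, hUt0, hrt⟩ := hU t ht
  obtain ⟨hUu, hUu0, hru⟩ := hU u hu
  exact deriv_firstZero_lt_of_lt_at_zero hfpos hf hUt hUu (by rwa [hUt0]) (by rwa [hUt0, hUu0])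
    hrt hru

/-- Under hypothesis (H), the Neumann value `t ↦ U_t'(r_t)` is strictly decreasing on
`(0,∞)`. -/
theorem stmt13 (f : ℝ → ℝ) (hf : ContDiff ℝ 1 f)
    (hH : ∀ x > (0:ℝ), 0 < f x ∧ x * deriv f x ≤ f x)
    (U : ℝ → ℝ → ℝ) (r : ℝ → ℝ)
    (hU : ∀ t > (0:ℝ), IsEvenSol f (U t) ∧ U t 0 = t ∧
      r t ∈ Set.Ioo 0 Real.pi ∧ U t (r t) = 0 ∧ ∀ ρ ∈ Set.Ioo 0 (r t), U t ρ ≠ 0) :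
    StrictAntiOn (fun t => deriv (U t) (r t)) (Set.Ioi 0) :=
  stmt13_general f (fun x hx => (hH x hx).1)
    (antitoneOn_div_id_of_mul_deriv_le (hf.differentiable (by norm_num)).differentiableOn
      fun x hx => (hH x hx).2) U r hU
end

section
/- Let f: ℝ → ℝ satisfy hypothesis (H) and let 0 < s < t. Then r_s ≤ r_t, and U_s(ρ) < U_t(ρ) for every ρ ∈ (−r_s, r_s); i.e. the family of solutions U_t is strictly increasing in the parameter t, and the first-zero radius r_t is non-decreasing in t. -/
open Real Set

/-!
With the weight `p = sin`, the equation reads `(p U')' = -p f(U)`. For two solutions `0 < u ≤ v`,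
the weighted Wronskian `W = p (u' v - v' u)` vanishes at `0` and
`W' = p (f(v) u - f(u) v) = p u v (f(v)/v - f(u)/u) ≤ 0`, because `x f'(x) ≤ f(x)` makes `f(x)/x`
nonincreasing. Hence `(v/u)' = -W / (p u²) ≥ 0`: as long as `u` stays below `v`, the ratio `v/u` is
at least its initial value, which exceeds `1`, so `u` can never catch up with `v`.
-/

theorem antitoneOn_div_self_of_mul_deriv_le {f : ℝ → ℝ} (hf : DifferentiableOn ℝ f (Ioi 0))
    (h : ∀ x > 0, x * deriv f x ≤ f x) : AntitoneOn (fun x => f x / x) (Ioi 0) := by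
  have hderiv : ∀ x ∈ Ioi (0 : ℝ),
      HasDerivAt (fun y => f y / y) ((deriv f x * x - f x * 1) / x ^ 2) x := fun x hx =>
    (hf.differentiableAt (Ioi_mem_nhds hx)).hasDerivAt.div (hasDerivAt_id x) (ne_of_gt hx)
  refine antitoneOn_of_hasDerivWithinAt_nonpos (convex_Ioi 0)
    (fun x hx => (hderiv x hx).continuousAt.continuousWithinAt)
    (fun x hx => (hderiv x (interior_subset hx)).hasDerivWithinAt) fun x hx => ?_
  have := h x (interior_subset hx)
  exact div_nonpos_of_nonpos_of_nonneg (by linarith) (sq_nonneg x)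

theorem mul_le_mul_of_antitoneOn_div_self {K : Type*} [Field K] [LinearOrder K]
    [IsStrictOrderedRing K] {f : K → K} (hf : AntitoneOn (fun x => f x / x) (Ioi 0)) {a b : K}
    (ha : 0 < a) (hab : a ≤ b) : f b * a ≤ f a * b := by
  have hb : 0 < b := ha.trans_le hab
  exact (div_le_div_iff₀ hb ha).1 (hf ha hb hab)

section Continuity

variable {α β : Type*} [ConditionallyCompleteLinearOrder α] [TopologicalSpace α]
  [OrderTopology α] [LinearOrder β] [TopologicalSpace β] [OrderClosedTopology β]

theorem forall_mem_Ico_lt_of_continuousOn {u v : α → β} {a b : α}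
    (hu : ContinuousOn u (Ico a b)) (hv : ContinuousOn v (Ico a b)) (ha : u a < v a)
    (hstep : ∀ c ∈ Ioo a b, (∀ x ∈ Ico a c, u x < v x) → u c < v c) :
    ∀ x ∈ Ico a b, u x < v x := by
  intro x hx
  by_contra! hvu
  have hsub : Icc a x ⊆ Ico a b := Icc_subset_Ico_right hx.2
  have hclosed : IsClosed {y ∈ Icc a x | v y ≤ u y} :=
    isClosed_Icc.isClosed_le (hv.mono hsub) (hu.mono hsub)
  obtain ⟨c, ⟨hc, hvuc⟩, hleast⟩ :=
    (isCompact_Icc.of_isClosed_subset hclosed fun _ hy => hy.1).exists_isLeast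
      ⟨x, right_mem_Icc.2 hx.1, hvu⟩
  have hac : a < c := hc.1.lt_of_ne <| by rintro rfl; exact hvuc.not_gt ha
  refine hvuc.not_gt (hstep c ⟨hac, (hsub hc).2⟩ fun y hy => ?_)
  by_contra! hvuy
  exact hy.2.not_ge (hleast ⟨⟨hy.1, hy.2.le.trans hc.2⟩, hvuy⟩)

theorem forall_mem_Ico_pos_of_ne_zero [DenselyOrdered α] [Zero β] {g : α → β} {a b : α}
    (hg : ContinuousOn g (Ico a b)) (ha : 0 < g a) (hne : ∀ x ∈ Ioo a b, g x ≠ 0) :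
    ∀ x ∈ Ico a b, 0 < g x := by
  intro x hx
  by_contra! hgx
  obtain ⟨z, hz, hgz⟩ :=
    intermediate_value_Icc' hx.1 (hg.mono (Icc_subset_Ico_right hx.2)) ⟨hgx, ha.le⟩
  have haz : a < z := hz.1.lt_of_ne <| by rintro rfl; exact ha.ne' hgz
  exact hne z ⟨haz, hz.2.trans_lt hx.2⟩ hgz

end Continuity

/-- `u` solves the equation `(p u')' + p f(u) = 0` on `(a, b)`, written in divergence form with
weight `p`, and its flux `p u'` vanishes at `a`. The endpoint condition is imposed on the flux
rather than on `u'`, so that `p` may vanish at `a`, as it does for radial equations. -/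
structure IsDivergenceSol (p f u : ℝ → ℝ) (a b : ℝ) : Prop where
  continuousOn : ContinuousOn u (Ico a b)
  continuousOn_flux : ContinuousOn (fun x => p x * deriv u x) (Ico a b)
  flux_left : p a * deriv u a = 0
  hasDerivAt : ∀ x ∈ Ioo a b, HasDerivAt u (deriv u x) x
  hasDerivAt_flux : ∀ x ∈ Ioo a b,
    HasDerivAt (fun y => p y * deriv u y) (-(p x * f (u x))) x

/-- The Wronskian `p (u' v - v' u)` of `u` and `v` weighted by `p`, which measures the growth of
the ratio `v / u`. -/
noncomputable def weightedWronskian (p u v : ℝ → ℝ) (x : ℝ) : ℝ :=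
  p x * deriv u x * v x - p x * deriv v x * u x

namespace IsDivergenceSol

variable {p f u v : ℝ → ℝ} {a b : ℝ}

theorem weightedWronskian_left (hu : IsDivergenceSol p f u a b)
    (hv : IsDivergenceSol p f v a b) : weightedWronskian p u v a = 0 := by
  rw [weightedWronskian, hu.flux_left, hv.flux_left, zero_mul, zero_mul, sub_zero]

theorem continuousOn_weightedWronskian (hu : IsDivergenceSol p f u a b)
    (hv : IsDivergenceSol p f v a b) : ContinuousOn (weightedWronskian p u v) (Ico a b) :=
  (hu.continuousOn_flux.mul hv.continuousOn).sub (hv.continuousOn_flux.mul hu.continuousOn)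

theorem hasDerivAt_weightedWronskian (hu : IsDivergenceSol p f u a b)
    (hv : IsDivergenceSol p f v a b) {x : ℝ} (hx : x ∈ Ioo a b) :
    HasDerivAt (weightedWronskian p u v) (p x * (f (v x) * u x - f (u x) * v x)) x := by
  refine (((hu.hasDerivAt_flux x hx).mul (hv.hasDerivAt x hx)).sub
    ((hv.hasDerivAt_flux x hx).mul (hu.hasDerivAt x hx))).congr_deriv ?_
  ring

theorem weightedWronskian_nonpos (hu : IsDivergenceSol p f u a b)
    (hv : IsDivergenceSol p f v a b) (hp : ∀ x ∈ Ioo a b, 0 ≤ p x)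
    (hf : AntitoneOn (fun x => f x / x) (Ioi 0)) {c : ℝ} (hc : c ∈ Ico a b)
    (hpos : ∀ x ∈ Ioo a c, 0 < u x) (hle : ∀ x ∈ Ioo a c, u x ≤ v x) :
    weightedWronskian p u v c ≤ 0 := by
  have hsub : Ioo a c ⊆ Ioo a b := Ioo_subset_Ioo_right hc.2.le
  have hanti : AntitoneOn (weightedWronskian p u v) (Icc a c) := by
    refine antitoneOn_of_hasDerivWithinAt_nonpos
      (f' := fun x => p x * (f (v x) * u x - f (u x) * v x)) (convex_Icc a c)
      ((hu.continuousOn_weightedWronskian hv).mono (Icc_subset_Ico_right hc.2)) ?_ ?_ <;>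
      rw [interior_Icc] <;> intro x hx
    · exact (hu.hasDerivAt_weightedWronskian hv (hsub hx)).hasDerivWithinAt
    · exact mul_nonpos_of_nonneg_of_nonpos (hp x (hsub hx))
        (sub_nonpos.2 (mul_le_mul_of_antitoneOn_div_self hf (hpos x hx) (hle x hx)))
  calc weightedWronskian p u v c ≤ weightedWronskian p u v a :=
        hanti (left_mem_Icc.2 hc.1) (right_mem_Icc.2 hc.1) hc.1
    _ = 0 := hu.weightedWronskian_left hv

theorem monotoneOn_div (hu : IsDivergenceSol p f u a b) (hv : IsDivergenceSol p f v a b)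
    (hp : ∀ x ∈ Ioo a b, 0 < p x) {c : ℝ} (hcb : c < b) (hu0 : ∀ x ∈ Icc a c, u x ≠ 0)
    (hW : ∀ x ∈ Ioo a c, weightedWronskian p u v x ≤ 0) :
    MonotoneOn (fun x => v x / u x) (Icc a c) := by
  have hIcc : Icc a c ⊆ Ico a b := Icc_subset_Ico_right hcb
  have hIoo : Ioo a c ⊆ Ioo a b := Ioo_subset_Ioo_right hcb.le
  refine monotoneOn_of_hasDerivWithinAt_nonneg
    (f' := fun x => (deriv v x * u x - v x * deriv u x) / u x ^ 2) (convex_Icc a c)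
    ((hv.continuousOn.mono hIcc).div (hu.continuousOn.mono hIcc) hu0) ?_ ?_ <;>
    rw [interior_Icc] <;> intro x hx
  · exact ((hv.hasDerivAt x (hIoo hx)).div (hu.hasDerivAt x (hIoo hx))
      (hu0 x (Ioo_subset_Icc_self hx))).hasDerivWithinAt
  · have hfactor :
        weightedWronskian p u v x = p x * (deriv u x * v x - deriv v x * u x) := by
      rw [weightedWronskian]; ring
    have hnonpos : deriv u x * v x - deriv v x * u x ≤ 0 :=
      nonpos_of_mul_nonpos_right (hfactor ▸ hW x hx) (hp x (hIoo hx))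
    exact div_nonneg (by linarith) (sq_nonneg _)

theorem lt_of_left_lt (hu : IsDivergenceSol p f u a b) (hv : IsDivergenceSol p f v a b)
    (hp : ∀ x ∈ Ioo a b, 0 < p x) (hf : AntitoneOn (fun x => f x / x) (Ioi 0))
    (hpos : ∀ x ∈ Ico a b, 0 < u x) (huv : u a < v a) : ∀ x ∈ Ico a b, u x < v x := by
  refine forall_mem_Ico_lt_of_continuousOn hu.continuousOn hv.continuousOn huv
    fun c hc hlt => ?_
  have hac : a ≤ c := hc.1.le
  have hpos' : ∀ x ∈ Icc a c, 0 < u x := fun x hx => hpos x ⟨hx.1, hx.2.trans_lt hc.2⟩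
  have hW : ∀ x ∈ Ioo a c, weightedWronskian p u v x ≤ 0 := fun x hx =>
    hu.weightedWronskian_nonpos hv (fun y hy => (hp y hy).le) hf ⟨hx.1.le, hx.2.trans hc.2⟩
      (fun y hy => hpos' y ⟨hy.1.le, (hy.2.trans hx.2).le⟩)
      (fun y hy => (hlt y ⟨hy.1.le, hy.2.trans hx.2⟩).le)
  have hratio : 1 < v c / u c :=
    calc 1 < v a / u a := (one_lt_div (hpos' a (left_mem_Icc.2 hac))).2 huv
      _ ≤ v c / u c := hu.monotoneOn_div hv hp hc.2 (fun x hx => (hpos' x hx).ne') hW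
          (left_mem_Icc.2 hac) (right_mem_Icc.2 hac) hac
  exact (one_lt_div (hpos' c (right_mem_Icc.2 hac))).1 hratio

end IsDivergenceSol

namespace IsEvenSol

variable {f u : ℝ → ℝ}

theorem apply_abs (hu : IsEvenSol f u) {x : ℝ} (hx : x ∈ Ioo (-π) π) : u |x| = u x := by
  rcases abs_choice x with h | h
  · rw [h]
  · rw [h, hu.1 x hx]

theorem isDivergenceSol_sin (hu : IsEvenSol f u) {R : ℝ} (hR : R ≤ π) :
    IsDivergenceSol sin f u 0 R := by
  obtain ⟨-, hsmooth, heq⟩ := hu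
  have hsub : Ico 0 R ⊆ Ioo (-π) π := fun x hx =>
    ⟨(neg_lt_zero.2 pi_pos).trans_le hx.1, hx.2.trans_le hR⟩
  have hderiv : DifferentiableOn ℝ (deriv u) (Ioo (-π) π) :=
    (hsmooth.deriv_of_isOpen isOpen_Ioo (m := 1) (by norm_num)).differentiableOn one_ne_zero
  refine ⟨hsmooth.continuousOn.mono hsub,
    continuous_sin.continuousOn.mul (hderiv.continuousOn.mono hsub), by simp, ?_, ?_⟩ <;>
    intro x hx <;> have hx' := hsub (Ioo_subset_Ico_self hx)
  · exact ((hsmooth.differentiableOn two_ne_zero).differentiableAt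
      (isOpen_Ioo.mem_nhds hx')).hasDerivAt
  · have hsin : sin x ≠ 0 := (sin_pos_of_pos_of_lt_pi hx.1 hx'.2).ne'
    have hode := heq x hx' hx.1.ne'
    field_simp at hode
    refine ((hasDerivAt_sin x).mul
      (hderiv.differentiableAt (isOpen_Ioo.mem_nhds hx')).hasDerivAt).congr_deriv ?_
    linarith

end IsEvenSol

theorem stmt14_general {f u v : ℝ → ℝ} (hf : AntitoneOn (fun x => f x / x) (Ioi 0))
    (hu : IsEvenSol f u) (hv : IsEvenSol f v) (hu0 : 0 < u 0) (huv : u 0 < v 0) {R S : ℝ}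
    (hR : R ≤ π) (hne : ∀ ρ ∈ Ioo 0 R, u ρ ≠ 0) (hS : 0 ≤ S) (hvS : v S = 0) :
    R ≤ S ∧ ∀ ρ ∈ Ioo (-R) R, u ρ < v ρ := by
  have hsol : IsDivergenceSol sin f u 0 R := hu.isDivergenceSol_sin hR
  have hpos : ∀ ρ ∈ Ico 0 R, 0 < u ρ := forall_mem_Ico_pos_of_ne_zero hsol.continuousOn hu0 hne
  have hlt : ∀ ρ ∈ Ico 0 R, u ρ < v ρ :=
    hsol.lt_of_left_lt (hv.isDivergenceSol_sin hR)
      (fun ρ hρ => sin_pos_of_pos_of_lt_pi hρ.1 (hρ.2.trans_le hR)) hf hpos huv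
  constructor
  · by_contra! hSR
    exact ((hpos S ⟨hS, hSR⟩).trans (hlt S ⟨hS, hSR⟩)).ne' hvS
  · intro ρ hρ
    have hρπ : ρ ∈ Ioo (-π) π := Ioo_subset_Ioo (neg_le_neg hR) hR hρ
    rw [← hu.apply_abs hρπ, ← hv.apply_abs hρπ]
    exact hlt |ρ| ⟨abs_nonneg ρ, abs_lt.2 hρ⟩

/-- Under hypothesis (H), the family `U_t` is strictly increasing in `t` and the
first-zero radius `r_t` is non-decreasing in `t`. -/
theorem stmt14 (f : ℝ → ℝ) (hf : ContDiff ℝ 1 f)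
    (hH : ∀ x > (0:ℝ), 0 < f x ∧ x * deriv f x ≤ f x)
    (U : ℝ → ℝ → ℝ) (r : ℝ → ℝ)
    (hU : ∀ t > (0:ℝ), IsEvenSol f (U t) ∧ U t 0 = t ∧
      r t ∈ Set.Ioo 0 Real.pi ∧ U t (r t) = 0 ∧ ∀ ρ ∈ Set.Ioo 0 (r t), U t ρ ≠ 0)
    (s t : ℝ) (hs : 0 < s) (hst : s < t) :
    r s ≤ r t ∧ ∀ ρ ∈ Set.Ioo (-(r s)) (r s), U s ρ < U t ρ := by
  obtain ⟨hUs, hs0, ⟨-, hrs⟩, -, hne⟩ := hU s hs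
  obtain ⟨hUt, ht0, ⟨hrt, -⟩, hUtr, -⟩ := hU t (hs.trans hst)
  have hanti := antitoneOn_div_self_of_mul_deriv_le (hf.differentiable one_ne_zero).differentiableOn
    fun x hx => (hH x hx).2
  exact stmt14_general hanti hUs hUt (by rwa [hs0]) (by rwa [hs0, ht0]) hrs.le hne hrt.le hUtr
end
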